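/- arXiv:1806.01039 — 2 statements merged into one kernel-verified Lean document; each statement's English description precedes it below -/
import Mathlib

section
/- For every δ with 0 < δ < 3/5 there is a constant C = C(δ) > 0, independent of N, M, L, such that for all dyadic numbers N, M, L and every u ∈ 𝒮(ℝ×ℝ²) whose space-time Fourier transform ũ(τ,ξ,η) is supported in { (τ,ξ,η) : N/2 ≤ |(ξ,η)| ≤ 2N, M/2 ≤ |ξ+η| ≤ 2M, L/2 ≤ |τ − ξ³ − η³| ≤ 2L }, one has ‖u‖_{L^{2/(1−δ)}_{t,x,y}(ℝ×ℝ²)} ≤ C L^{5δ/6} ‖u‖_{L²_{t,x,y}}. -/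
/-!
The estimate follows from a weak-type bound at the endpoint `δ = 3/5` (exponent `5`), which is
summed over the level sets of `u`.

Write `U = ‖u‖₂²`. For a height `lam`, let `g = θ u` be a smooth truncation of `u` to
`{‖u‖ ≥ lam}` (`truncation`) and `I = ∫ θ ‖u‖²`, the pairing of `g` with `u`. By Plancherel and a
weighted Cauchy–Schwarz inequality on the Fourier support of `u` (`duality_bound`), `I²` is at most
`e^π U` times `∫ W ‖ĝ‖²`, where `W` is the Gaussian of width `L` in the modulation
`τ - ξ³ - η³`, cut off sharply to a box in `(ξ, η)`. This is a restriction-type quantity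
(`weighted_bound`). Split `W` as a wider Gaussian of height at most `L a`, contributing
`L a ‖g‖₂²`, plus a difference whose Fourier transform is a product of a factor
`L (1 - exp (-π t² / a²))` and two truncated Airy kernels. Each Airy kernel is `O(|t|^{-1/3})`
uniformly in the cutoff by van der Corput (`airy_bound`), so the product is `O(L a^{-2/3})`
(`fourier_boxMult_gdiff_le`) and contributes `O(L a^{-2/3} ‖g‖₁²)`. As `‖g‖₂² ≤ I` and
`‖g‖₁ ≤ 2 I / lam`, the choice `a ~ I / (L U)` gives (`level_bound`)

  `∫_{‖u‖ ≥ lam} ‖u‖² ≲ (L U)^{5/2} lam^{-3}`.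

For `p = 2 / (1 - δ) = q + 2`, the condition `δ < 3/5` is `q < 3`, and the layer-cake formula for
`‖u‖^q` with respect to `‖u‖² dx`, split at height `L^{5/6} U^{1/2}`, yields
`‖u‖_p^p ≲ U (L^{5/6} U^{1/2})^q` (`lp_bound`), the `p`-th power of the claim.
-/

noncomputable section

open MeasureTheory
open scoped ENNReal

/-- Space-time Fourier transform `ũ(τ,ξ,η)` of a function `u(t,x,y)`. -/
def ftt (w : ℝ → ℝ → ℝ → ℂ) (τ ξ η : ℝ) : ℂ :=
  ∫ t : ℝ, ∫ x : ℝ, ∫ y : ℝ,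
    Complex.exp (-Complex.I * ((t * τ + x * ξ + y * η : ℝ) : ℂ)) * w t x y

/-- L^r norm over all of `ℝ × ℝ²`, for a real exponent `r`. -/
def lpnorm3 (r : ℝ) (w : ℝ → ℝ → ℝ → ℂ) : ℝ≥0∞ :=
  (∫⁻ v : ℝ × ℝ × ℝ, (‖w v.1 v.2.1 v.2.2‖₊ : ℝ≥0∞) ^ r) ^ (1 / r)

section
open scoped FourierTransform SchwartzMap

/-! ### Truncated Airy kernels -/

/-- First-derivative van der Corput estimate for the cubic phase `x ξ + s ξ³`: away from the
stationary points one integration by parts gives the bound. The derivative of the phase is monotone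
on `[p, q] ⊆ [0, ∞)`, so the error term integrates exactly. -/
lemma vdc_first (x s p q μ : ℝ) (hs : 0 ≤ s) (hp : 0 ≤ p) (hpq : p ≤ q) (hμ : 0 < μ)
    (h : ∀ ξ ∈ Set.Icc p q, μ ≤ |x + 3 * s * ξ ^ 2|) :
    ‖∫ ξ in p..q, Complex.exp (Complex.I * ((x * ξ + s * ξ ^ 3 : ℝ) : ℂ))‖ ≤ 4 / μ := by
  set ψ : ℝ → ℝ := fun ξ => x + 3 * s * ξ ^ 2 with hψ
  set f : ℝ → ℂ := fun ξ => Complex.exp (Complex.I * ((x * ξ + s * ξ ^ 3 : ℝ) : ℂ)) with hf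
  have hu : Set.uIcc p q = Set.Icc p q := Set.uIcc_of_le hpq
  have hne : ∀ ξ ∈ Set.Icc p q, ψ ξ ≠ 0 := fun ξ hξ h0 => by
    have := h ξ hξ
    rw [show x + 3 * s * ξ ^ 2 = 0 from h0, abs_zero] at this; linarith
  have hnf : ∀ ξ, ‖f ξ‖ = 1 := fun ξ => by
    rw [hf]; simp only; rw [mul_comm]; exact Complex.norm_exp_ofReal_mul_I _
  have hdψ : ∀ ξ, HasDerivAt ψ (6 * s * ξ) ξ := fun ξ => by
    have := ((hasDerivAt_pow 2 ξ).const_mul (3 * s)).const_add x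
    exact this.congr_deriv (by norm_num; ring)
  have hdf : ∀ ξ, HasDerivAt f (f ξ * (Complex.I * (ψ ξ : ℂ))) ξ := fun ξ => by
    have h1 : HasDerivAt (fun ξ : ℝ => x * ξ + s * ξ ^ 3) (ψ ξ) ξ := by
      have := ((hasDerivAt_id ξ).const_mul x).add ((hasDerivAt_pow 3 ξ).const_mul s)
      exact this.congr_deriv (by simp [hψ]; ring)
    exact (h1.ofReal_comp.const_mul Complex.I).cexp
  have hcf : Continuous f := by rw [hf]; fun_prop
  have hcψ : Continuous ψ := by rw [hψ]; fun_prop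
  -- the antiderivative up to a controlled error
  set F : ℝ → ℂ := fun ξ => f ξ / (Complex.I * (ψ ξ : ℂ)) with hF
  have hdF : ∀ ξ ∈ Set.Icc p q,
      HasDerivAt F (f ξ - f ξ * (Complex.I * ((6 * s * ξ : ℝ) : ℂ)) / (Complex.I * (ψ ξ : ℂ)) ^ 2) ξ := by
    intro ξ hξ
    have h0 : (Complex.I * (ψ ξ : ℂ)) ≠ 0 :=
      mul_ne_zero Complex.I_ne_zero (by exact_mod_cast hne ξ hξ)
    refine ((hdf ξ).div ((hdψ ξ).ofReal_comp.const_mul Complex.I) h0).congr_deriv ?_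
    rw [sub_div]
    congr 1
    rw [mul_assoc, ← sq, mul_div_assoc, div_self (pow_ne_zero 2 h0), mul_one]
  have hcF' : ContinuousOn (fun ξ => f ξ * (Complex.I * ((6 * s * ξ : ℝ) : ℂ)) / (Complex.I * (ψ ξ : ℂ)) ^ 2)
      (Set.uIcc p q) := by
    rw [hu]
    refine ContinuousOn.div (by fun_prop) (by fun_prop) fun ξ hξ => ?_
    exact pow_ne_zero _ (mul_ne_zero Complex.I_ne_zero (by exact_mod_cast hne ξ hξ))
  have hi1 : IntervalIntegrable f volume p q := hcf.intervalIntegrable _ _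
  have hi2 := hcF'.intervalIntegrable (μ := volume)
  have hFTC := intervalIntegral.integral_eq_sub_of_hasDerivAt
    (fun ξ hξ => hdF ξ (hu ▸ hξ)) (hi1.sub hi2)
  rw [intervalIntegral.integral_sub hi1 hi2] at hFTC
  have hb : ∀ ξ ∈ Set.Icc p q, ‖F ξ‖ ≤ 1 / μ := fun ξ hξ => by
    rw [hF]; simp only [norm_div, hnf, norm_mul, Complex.norm_I, one_mul, Complex.norm_real,
      Real.norm_eq_abs]
    exact one_div_le_one_div_of_le hμ (h ξ hξ)
  have hb' : ∀ ξ ∈ Set.Icc p q, |(ψ ξ)⁻¹| ≤ 1 / μ := fun ξ hξ => by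
    rw [abs_inv, ← one_div]
    exact one_div_le_one_div_of_le hμ (h ξ hξ)
  have hcg : ContinuousOn (fun ξ => (6 * s * ξ) / (ψ ξ) ^ 2) (Set.uIcc p q) := by
    rw [hu]
    exact ContinuousOn.div (by fun_prop) (by fun_prop) fun ξ hξ => pow_ne_zero _ (hne ξ hξ)
  have hE : ‖∫ ξ in p..q, f ξ * (Complex.I * ((6 * s * ξ : ℝ) : ℂ)) / (Complex.I * (ψ ξ : ℂ)) ^ 2‖
      ≤ ∫ ξ in p..q, (6 * s * ξ) / (ψ ξ) ^ 2 := by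
    refine intervalIntegral.norm_integral_le_of_norm_le hpq ?_ hcg.intervalIntegrable
    refine Filter.Eventually.of_forall fun ξ hξ => ?_
    simp only [norm_div, norm_mul, norm_pow, hnf, Complex.norm_I, one_mul, Complex.norm_real,
      Real.norm_eq_abs, sq_abs]
    have h6 : 0 ≤ 6 * s * ξ := by have : 0 ≤ ξ := hp.trans hξ.1.le
                                  positivity
    rw [← abs_of_nonneg h6]; simp [abs_mul]
  have hE2 : ∫ ξ in p..q, (6 * s * ξ) / (ψ ξ) ^ 2 = -(ψ q)⁻¹ - -(ψ p)⁻¹ := by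
    refine intervalIntegral.integral_eq_sub_of_hasDerivAt (f := fun ξ => -(ψ ξ)⁻¹) (fun ξ hξ => ?_)
      hcg.intervalIntegrable
    exact ((hdψ ξ).inv (hne ξ (hu ▸ hξ))).neg.congr_deriv (by ring)
  have hp' := Set.left_mem_Icc.2 hpq
  have hq' := Set.right_mem_Icc.2 hpq
  rw [hE2] at hE
  have e1 := abs_le.1 (hb' p hp')
  have e2 := abs_le.1 (hb' q hq')
  rw [sub_eq_iff_eq_add] at hFTC
  rw [hFTC]
  calc _ ≤ ‖F q‖ + ‖F p‖ + _ := (norm_add_le _ _).trans (add_le_add (norm_sub_le _ _) hE)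
    _ ≤ 1 / μ + 1 / μ + (1 / μ + 1 / μ) := by
      have := hb p hp'; have := hb q hq'; linarith
    _ = 4 / μ := by ring

/-- The stationary point on the positive half-line is `b = √(max 0 (-x / 3s))` with `s = d⁻³`. The
window of radius `d` around it is estimated trivially; outside it the phase derivative is at least
`3 s d²`, and `vdc_first` contributes `4 / (3 s d²) = 4 d / 3` on either side. -/
lemma airy_half (x d R : ℝ) (hd : 0 < d) (hR : 0 ≤ R) :
    ‖∫ ξ in (0 : ℝ)..R, Complex.exp (Complex.I * ((x * ξ + (d ^ 3)⁻¹ * ξ ^ 3 : ℝ) : ℂ))‖ ≤ 5 * d := by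
  set s := (d ^ 3)⁻¹ with hs
  have hs0 : 0 < s := by positivity
  have hsd : s * d ^ 3 = 1 := inv_mul_cancel₀ (by positivity)
  set b := Real.sqrt (max 0 (-x / (3 * s))) with hb
  have hb0 : 0 ≤ b := Real.sqrt_nonneg _
  have hb2 : b ^ 2 = max 0 (-x / (3 * s)) := Real.sq_sqrt (le_max_left _ _)
  have hbx : -x ≤ 3 * s * b ^ 2 := by
    have := le_max_right 0 (-x / (3 * s))
    rw [← hb2, div_le_iff₀ (by positivity)] at this; linarith
  set α := max 0 (min R (b - d)) with hα
  set β := min R (b + d) with hβ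
  have hα0 : 0 ≤ α := le_max_left _ _
  have hαβ : α ≤ β := by
    simp only [hα, hβ]
    refine max_le (le_min hR (by linarith)) (le_min (min_le_left _ _) ?_)
    exact (min_le_right _ _).trans (by linarith)
  have hβR : β ≤ R := min_le_left _ _
  have hlen : β - α ≤ 2 * d := by
    have h1 : min R (b - d) ≤ α := le_max_right _ _
    have h2 : β ≤ R := min_le_left _ _
    have h3 : β ≤ b + d := min_le_right _ _
    rcases le_total R (b - d) with h | h
    · rw [min_eq_left h] at h1; linarith
    · rw [min_eq_right h] at h1; linarith
  set f : ℝ → ℂ := fun ξ => Complex.exp (Complex.I * ((x * ξ + s * ξ ^ 3 : ℝ) : ℂ)) with hf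
  have hi : ∀ u v, IntervalIntegrable f volume u v := fun u v => by
    apply Continuous.intervalIntegrable; rw [hf]; fun_prop
  have hμ : 0 < 3 * s * d ^ 2 := by positivity
  have hμd : 4 / (3 * s * d ^ 2) = 4 / 3 * d := by
    rw [hs]; field_simp
  have I1 : ‖∫ ξ in (0 : ℝ)..α, f ξ‖ ≤ 4 / 3 * d := by
    rcases le_or_gt (min R (b - d)) 0 with h | h
    · have : α = 0 := max_eq_left h
      rw [this]; simp; positivity
    · have hαe : α = min R (b - d) := max_eq_right h.le
      rw [← hμd]
      refine vdc_first x s 0 α _ hs0.le le_rfl hα0 hμ fun ξ hξ => ?_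
      have h1 : ξ ≤ b - d := hξ.2.trans (hαe ▸ min_le_right _ _)
      have hbpos : 0 < b ^ 2 := by
        have : 0 < b := by linarith [lt_min_iff.1 h]
        positivity
      have hbe : -x = 3 * s * b ^ 2 := by
        rcases max_choice 0 (-x / (3 * s)) with h' | h'
        · rw [h'] at hb2; linarith
        · rw [hb2, h']; field_simp
      rw [abs_of_nonpos]
      · have : d * d ≤ (b - ξ) * (b + ξ) :=
          mul_le_mul (by linarith) (by linarith [hξ.1]) hd.le (by linarith)
        nlinarith
      · have : ξ ^ 2 ≤ b ^ 2 := pow_le_pow_left₀ hξ.1 (by linarith) 2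
        nlinarith
  have I3 : ‖∫ ξ in β..R, f ξ‖ ≤ 4 / 3 * d := by
    rcases le_or_gt R (b + d) with h | h
    · have : β = R := min_eq_left h
      rw [this]; simp; positivity
    · have hβe : β = b + d := min_eq_right h.le
      rw [← hμd]
      refine vdc_first x s β R _ hs0.le (hα0.trans hαβ) hβR hμ fun ξ hξ => ?_
      have h1 : b + d ≤ ξ := hβe ▸ hξ.1
      refine le_trans ?_ (le_abs_self _)
      have : d * d ≤ (ξ - b) * (ξ + b) :=
        mul_le_mul (by linarith) (by linarith) hd.le (by linarith)
      nlinarith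
  have I2 : ‖∫ ξ in α..β, f ξ‖ ≤ 2 * d := by
    have := intervalIntegral.norm_integral_le_of_norm_le_const (a := α) (b := β) (C := 1) (f := f)
      (fun ξ _ => by
        rw [hf]; simp only; rw [mul_comm]; exact (Complex.norm_exp_ofReal_mul_I _).le)
    rw [abs_of_nonneg (by linarith)] at this
    linarith
  rw [← intervalIntegral.integral_add_adjacent_intervals (hi 0 α) (hi α R),
    ← intervalIntegral.integral_add_adjacent_intervals (hi α β) (hi β R)]
  calc _ ≤ _ := (norm_add_le _ _).trans (add_le_add le_rfl (norm_add_le _ _))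
    _ ≤ 5 * d := by linarith

lemma norm_osc_neg (x s a b : ℝ) :
    ‖∫ ξ in a..b, Complex.exp (Complex.I * ((-x * ξ + -s * ξ ^ 3 : ℝ) : ℂ))‖ =
    ‖∫ ξ in a..b, Complex.exp (Complex.I * ((x * ξ + s * ξ ^ 3 : ℝ) : ℂ))‖ := by
  rw [← Complex.norm_conj (∫ ξ in a..b, Complex.exp (Complex.I * ((x * ξ + s * ξ ^ 3 : ℝ) : ℂ)))]
  congr 1
  rw [intervalIntegral, intervalIntegral, map_sub, ← integral_conj, ← integral_conj]
  simp only [← Complex.exp_conj, map_mul, Complex.conj_I, Complex.conj_ofReal]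
  have : ∀ ξ : ℝ, Complex.I * ((-x * ξ + -s * ξ ^ 3 : ℝ) : ℂ) =
    -Complex.I * ((x * ξ + s * ξ ^ 3 : ℝ) : ℂ) := fun ξ => by push_cast; ring
  simp only [this]

lemma airy_pos (x d R : ℝ) (hd : 0 < d) (hR : 0 ≤ R) :
    ‖∫ ξ in (-R)..R, Complex.exp (Complex.I * ((x * ξ + (d ^ 3)⁻¹ * ξ ^ 3 : ℝ) : ℂ))‖ ≤ 10 * d := by
  have hi : ∀ u v, IntervalIntegrable (fun ξ : ℝ =>
      Complex.exp (Complex.I * ((x * ξ + (d ^ 3)⁻¹ * ξ ^ 3 : ℝ) : ℂ))) volume u v := fun u v => by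
    apply Continuous.intervalIntegrable; fun_prop
  rw [← intervalIntegral.integral_add_adjacent_intervals (hi (-R) 0) (hi 0 R)]
  have h1 := airy_half x d R hd hR
  have h2 : ‖∫ ξ in (-R)..0, Complex.exp (Complex.I * ((x * ξ + (d ^ 3)⁻¹ * ξ ^ 3 : ℝ) : ℂ))‖ ≤ 5 * d := by
    rw [← norm_osc_neg] at h1
    have := intervalIntegral.integral_comp_neg (a := 0) (b := R)
      (fun ξ : ℝ => Complex.exp (Complex.I * ((x * ξ + (d ^ 3)⁻¹ * ξ ^ 3 : ℝ) : ℂ)))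
    rw [neg_zero] at this
    rw [← this]
    convert h1 using 6
    push_cast; ring
  exact (norm_add_le _ _).trans (by linarith)

/-- Dispersive decay `|t|^{-1/3}` of the Airy kernel, uniformly in `x` and in the sharp frequency
cutoff `R`. -/
lemma airy_bound (x t R : ℝ) (ht : t ≠ 0) (hR : 0 ≤ R) :
    ‖∫ ξ in (-R)..R, Complex.exp (Complex.I *
      ((-(2 * Real.pi * x) * ξ + -((2 * Real.pi) ^ 3 * t) * ξ ^ 3 : ℝ) : ℂ))‖ ≤
      10 * |t| ^ (-(1 / 3) : ℝ) := by
  have hpi := Real.pi_gt_three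
  set d := (2 * Real.pi)⁻¹ * |t| ^ (-(1 / 3) : ℝ) with hd
  have ht' : 0 < |t| := abs_pos.2 ht
  have hd0 : 0 < d := by positivity
  have hdle : d ≤ |t| ^ (-(1 / 3) : ℝ) := by
    rw [hd]
    have : 0 < |t| ^ (-(1 / 3) : ℝ) := by positivity
    have h2 : (2 * Real.pi)⁻¹ ≤ 1 := inv_le_one_of_one_le₀ (by linarith)
    nlinarith
  have hd3 : (d ^ 3)⁻¹ = (2 * Real.pi) ^ 3 * |t| := by
    rw [hd, mul_pow, ← Real.rpow_natCast (|t| ^ (-(1 / 3) : ℝ)), ← Real.rpow_mul ht'.le]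
    norm_num
    rw [Real.rpow_neg_one]; field_simp
  rcases lt_or_gt_of_ne ht with h | h
  · rw [abs_of_neg h] at hd3
    have := airy_pos (-(2 * Real.pi * x)) d R hd0 hR
    rw [hd3] at this
    rw [← mul_neg ((2 * Real.pi) ^ 3)]
    linarith
  · rw [abs_of_pos h] at hd3
    have := airy_pos (2 * Real.pi * x) d R hd0 hR
    rw [hd3, ← norm_osc_neg] at this
    linarith

/-! ### Fourier multipliers on the Euclidean model space -/

section
variable {V : Type*} [NormedAddCommGroup V] [InnerProductSpace ℝ V] [FiniteDimensional ℝ V]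
  [MeasurableSpace V] [BorelSpace V]

/-- The quadratic form of a Fourier multiplier `m` is controlled by the `L¹ → L^∞` norm of
convolution with the Fourier transform of `m`. -/
lemma multiplier_bound (m : V → ℝ) (hm : Integrable m) (B : ℝ)
    (hB : ∀ v, ‖𝓕 (fun ζ => (m ζ : ℂ)) v‖ ≤ B) (g : 𝓢(V, ℂ)) :
    |∫ ζ, m ζ * ‖𝓕 g ζ‖ ^ 2| ≤ B * (∫ x, ‖g x‖) ^ 2 := by
  have hmc : Integrable (fun ζ => (m ζ : ℂ)) := hm.ofReal
  have hG : Integrable (fun ζ => (m ζ : ℂ) * 𝓕 g ζ) := by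
    refine hmc.mul_bdd (c := ‖(𝓕 g).toBoundedContinuousFunction‖) (𝓕 g).continuous.aestronglyMeasurable ?_
    exact Filter.Eventually.of_forall fun ζ => (𝓕 g).toBoundedContinuousFunction.norm_coe_le_norm ζ
  have h1 : ∫ ζ, (starRingEnd ℂ) (𝓕 g ζ) * ((m ζ : ℂ) * 𝓕 g ζ)
      = ∫ x, (starRingEnd ℂ) (g x) * 𝓕⁻ (fun ζ => (m ζ : ℂ) * 𝓕 g ζ) x := by
    have := VectorFourier.integral_sesq_fourierIntegral_eq_neg_flip (innerSL ℂ)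
      (L := innerₗ V) Real.continuous_fourierChar continuous_inner (g.integrable (μ := volume)) hG
    simpa [SchwartzMap.fourier_coe, mul_comm, Real.fourier_eq, Real.fourierInv_eq,
      VectorFourier.fourierIntegral] using! this
  have h2 : ∀ x, ‖𝓕⁻ (fun ζ => (m ζ : ℂ) * 𝓕 g ζ) x‖ ≤ B * ∫ y, ‖g y‖ := by
    intro x
    have hmx : Integrable (fun ζ => Real.fourierChar (inner ℝ ζ x) • (m ζ : ℂ)) := by
      have := (Real.fourierIntegral_convergent_iff (μ := volume) (f := fun ζ => (m ζ : ℂ)) (-x)).2 hmc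
      simpa using this
    have h3 := VectorFourier.integral_fourierIntegral_smul_eq_flip (L := innerₗ V)
      Real.continuous_fourierChar continuous_inner (g.integrable (μ := volume)) hmx
    have h4 : 𝓕⁻ (fun ζ => (m ζ : ℂ) * 𝓕 g ζ) x =
       ∫ y, g y • 𝓕 (fun ζ => (m ζ : ℂ)) (y - x) := by
      rw [Real.fourierInv_eq]
      convert! h3 using 2
      · ext ζ
        simp only [SchwartzMap.fourier_coe, smul_eq_mul, Circle.smul_def, Real.fourier_eq,
          VectorFourier.fourierIntegral, innerₗ_apply_apply]
        ring
      · ext y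
        congr 1
        simp only [Real.fourier_eq, VectorFourier.fourierIntegral, LinearMap.flip_apply,
          innerₗ_apply_apply, smul_smul, ← AddChar.map_add_eq_mul, inner_sub_right]
        congr 1; ext ζ
        rw [real_inner_comm, neg_sub, sub_eq_neg_add]
    rw [h4]
    calc _ ≤ ∫ y, ‖g y • 𝓕 (fun ζ => (m ζ : ℂ)) (y - x)‖ := norm_integral_le_integral_norm _
      _ ≤ ∫ y, B * ‖g y‖ := by
        refine integral_mono_of_nonneg (Filter.Eventually.of_forall fun y => norm_nonneg _)
          (g.integrable.norm.const_mul B) (Filter.Eventually.of_forall fun y => ?_)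
        simp only [smul_eq_mul, norm_mul]
        rw [mul_comm]
        exact mul_le_mul_of_nonneg_right (hB _) (norm_nonneg _)
      _ = _ := integral_const_mul _ _
  have h5 : ((∫ ζ, m ζ * ‖𝓕 g ζ‖ ^ 2 : ℝ) : ℂ) =
      ∫ ζ, (starRingEnd ℂ) (𝓕 g ζ) * ((m ζ : ℂ) * 𝓕 g ζ) := by
    rw [← integral_complex_ofReal]
    congr 1; ext ζ
    have := Complex.conj_mul' (𝓕 g ζ)
    push_cast
    rw [← this]; ring
  rw [← Real.norm_eq_abs, ← Complex.norm_real, h5, h1]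
  calc _ ≤ ∫ x, ‖(starRingEnd ℂ) (g x) * 𝓕⁻ (fun ζ => (m ζ : ℂ) * 𝓕 g ζ) x‖ :=
        norm_integral_le_integral_norm _
    _ ≤ ∫ x, ‖g x‖ * (B * ∫ y, ‖g y‖) := by
      refine integral_mono_of_nonneg (Filter.Eventually.of_forall fun y => norm_nonneg _)
          (g.integrable.norm.mul_const _) (Filter.Eventually.of_forall fun y => ?_)
      simp only [norm_mul, RCLike.norm_conj]
      exact mul_le_mul_of_nonneg_left (h2 y) (norm_nonneg _)
    _ = _ := by rw [integral_mul_const]; ring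
end

/-- `ℝ × ℝ²` with its Euclidean structure, in the coordinates `(t, x, y)`; the sup-normed product
`ℝ × ℝ × ℝ` carries no inner product, and hence no Fourier transform `𝓕`. -/
abbrev V3 := WithLp 2 (ℝ × WithLp 2 (ℝ × ℝ))

/-- The coordinate map from the Euclidean space `V3` to the plain product. -/
def toProd : V3 ≃L[ℝ] ℝ × ℝ × ℝ :=
  (WithLp.prodContinuousLinearEquiv 2 ℝ ℝ (WithLp 2 (ℝ × ℝ))).trans
    ((ContinuousLinearEquiv.refl ℝ ℝ).prodCongr (WithLp.prodContinuousLinearEquiv 2 ℝ ℝ ℝ))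

lemma toProd_apply (v : V3) : toProd v = (v.fst, v.snd.fst, v.snd.snd) := rfl

lemma mp_toProd : MeasurePreserving toProd := by
  have h1 := WithLp.volume_preserving_ofLp ℝ (WithLp 2 (ℝ × ℝ))
  have h2 := WithLp.volume_preserving_ofLp ℝ ℝ
  exact ((MeasurePreserving.id volume).prod h2).comp h1

lemma inner_toProd (v w : V3) : inner ℝ v w =
    (toProd v).1 * (toProd w).1 + (toProd v).2.1 * (toProd w).2.1 + (toProd v).2.2 * (toProd w).2.2 := by
  simp [WithLp.prod_inner_apply, toProd_apply]; ring

lemma me_toProd : MeasurableEmbedding toProd := toProd.toHomeomorph.measurableEmbedding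

/-! ### Multipliers depending on the modulation -/

/-- The dispersion relation `τ = ξ³ + η³` for the Fourier transform with kernel `e^{-2πi⟨·,·⟩}`:
after `(τ, ξ, η) ↦ 2π (τ, ξ, η)` the relation acquires the factor `(2π)²`. -/
def disp (w : ℝ × ℝ) : ℝ := (2 * Real.pi) ^ 2 * (w.1 ^ 3 + w.2 ^ 3)

lemma continuous_disp : Continuous disp := by unfold disp; fun_prop

/-- The measure-preserving shear taking the modulation `s = τ - disp (ξ, η)` back to `τ`. -/
def shear : (ℝ × ℝ × ℝ) ≃ₜ (ℝ × ℝ × ℝ) where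
  toFun z := (z.1 + disp z.2, z.2)
  invFun z := (z.1 - disp z.2, z.2)
  left_inv z := by simp
  right_inv z := by simp
  continuous_toFun := by have := continuous_disp; fun_prop
  continuous_invFun := by have := continuous_disp; fun_prop

lemma shear_apply (z : ℝ × ℝ × ℝ) : shear z = (z.1 + disp z.2, z.2) := rfl

lemma mp_shear : MeasurePreserving shear := by
  have h1 : MeasurePreserving (fun z : (ℝ × ℝ) × ℝ => (z.1, z.2 + disp z.1)) := by
    refine (MeasurePreserving.id (volume : Measure (ℝ × ℝ))).skew_product
      (g := fun w s => s + disp w) ?_ ?_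
    · have := continuous_disp
      exact Continuous.measurable (by fun_prop)
    · exact Filter.Eventually.of_forall fun w => (measurePreserving_add_right volume (disp w)).map_eq
  have h2 : MeasurePreserving (Prod.swap : (ℝ × ℝ) × ℝ → ℝ × (ℝ × ℝ)) :=
    Measure.measurePreserving_swap
  have h3 : MeasurePreserving (Prod.swap : ℝ × (ℝ × ℝ) → (ℝ × ℝ) × ℝ) :=
    Measure.measurePreserving_swap
  exact h2.comp (h1.comp h3)

/-- The multiplier `h (τ - disp (ξ, η))`, restricted to the frequency box `|ξ|, |η| ≤ R`. -/
def boxMult (h : ℝ → ℝ) (R : ℝ) (v : V3) : ℝ :=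
  h ((toProd v).1 - disp (toProd v).2) *
    ((Set.Icc (-R) R).indicator (fun _ => (1 : ℝ)) (toProd v).2.1 *
      (Set.Icc (-R) R).indicator (fun _ => (1 : ℝ)) (toProd v).2.2)

lemma integrable_box (R : ℝ) : Integrable ((Set.Icc (-R) R).indicator (fun _ => (1 : ℝ))) :=
  (integrable_indicator_iff measurableSet_Icc).2 (integrableOn_const (by simp))

lemma integrable_boxMult (h : ℝ → ℝ) (hh : Integrable h) (R : ℝ) : Integrable (boxMult h R) := by
  have h1 := hh.mul_prod ((integrable_box R).mul_prod (integrable_box R))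
  have h2 := (mp_shear.symm shear.toMeasurableEquiv).integrable_comp_of_integrable h1
  exact mp_toProd.integrable_comp_of_integrable h2

/-- In the modulation variable the Fourier transform of `boxMult h R` factors into that of `h` in
time and two truncated Airy kernels in space. -/
lemma fourier_boxMult (h : ℝ → ℝ) (R : ℝ) (hR : 0 ≤ R) (v : V3) :
    𝓕 (fun ζ => (boxMult h R ζ : ℂ)) v = 𝓕 (fun s => (h s : ℂ)) (toProd v).1 *
      ((∫ ξ in (-R)..R, Complex.exp (Complex.I * ((-(2 * Real.pi * (toProd v).2.1) * ξ +
          -((2 * Real.pi) ^ 3 * (toProd v).1) * ξ ^ 3 : ℝ) : ℂ))) *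
       (∫ ξ in (-R)..R, Complex.exp (Complex.I * ((-(2 * Real.pi * (toProd v).2.2) * ξ +
          -((2 * Real.pi) ^ 3 * (toProd v).1) * ξ ^ 3 : ℝ) : ℂ)))) := by
  set t := (toProd v).1 with ht
  set x := (toProd v).2.1 with hx
  set y := (toProd v).2.2 with hy
  have hI : ∀ f : ℝ → ℂ, ∫ ξ in (-R)..R, f ξ = ∫ ξ, (Set.Icc (-R) R).indicator f ξ := fun f => by
    rw [intervalIntegral.integral_of_le (by linarith), integral_indicator measurableSet_Icc,
      integral_Icc_eq_integral_Ioc]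
  set Φ : ℝ × ℝ × ℝ → ℂ := fun z =>
    Real.fourierChar (-(z.1 * t + z.2.1 * x + z.2.2 * y)) •
      ((h (z.1 - disp z.2) * ((Set.Icc (-R) R).indicator (fun _ => (1 : ℝ)) z.2.1 *
      (Set.Icc (-R) R).indicator (fun _ => (1 : ℝ)) z.2.2) : ℝ) : ℂ) with hΦ
  have e1 : 𝓕 (fun ζ => (boxMult h R ζ : ℂ)) v = ∫ z, Φ z := by
    rw [← mp_toProd.integral_comp me_toProd, Real.fourier_eq]
    simp only [hΦ, boxMult, inner_toProd, ← ht, ← hx, ← hy]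
  rw [e1, hI, hI, ← integral_prod_mul, Real.fourier_eq, ← integral_prod_mul,
    ← Measure.volume_eq_prod, ← Measure.volume_eq_prod,
    ← mp_shear.integral_comp shear.measurableEmbedding]
  congr 1
  ext ⟨s, ξ, η⟩
  simp only [hΦ, shear_apply, add_sub_cancel_right, Circle.smul_def,
    Real.fourierChar_apply, smul_eq_mul, RCLike.inner_apply, conj_trivial]
  by_cases h1 : ξ ∈ Set.Icc (-R) R
  · by_cases h2 : η ∈ Set.Icc (-R) R
    · simp only [Set.indicator_of_mem h1, Set.indicator_of_mem h2, mul_one]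
      rw [← Complex.exp_add, mul_right_comm (Complex.exp _), ← Complex.exp_add]
      congr 2
      simp only [disp]
      push_cast; ring
    · simp [Set.indicator_of_notMem h2]
  · simp [Set.indicator_of_notMem h1]

/-- The Gaussian of width `K` and integral one. -/
def gaussK (K s : ℝ) : ℝ := K⁻¹ * Real.exp (-Real.pi * (s / K) ^ 2)

lemma integrable_gaussK (K : ℝ) (hK : 0 < K) : Integrable (gaussK K) := by
  have := (integrable_exp_neg_mul_sq (b := Real.pi / K ^ 2) (by positivity)).const_mul K⁻¹
  refine this.congr (Filter.Eventually.of_forall fun s => ?_)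
  simp only [gaussK]
  congr 2; ring

lemma fourier_gaussK (K t : ℝ) (hK : 0 < K) :
    𝓕 (fun s => (gaussK K s : ℂ)) t = Real.exp (-Real.pi * K ^ 2 * t ^ 2) := by
  have h := congrFun (fourier_gaussian_pi (b := ((K ^ 2)⁻¹ : ℝ)) (by
    rw [Complex.ofReal_re]; positivity)) t
  have h2 : (((K ^ 2)⁻¹ : ℝ) : ℂ) ^ (1 / 2 : ℂ) = ((K⁻¹ : ℝ) : ℂ) := by
    rw [show (1 / 2 : ℂ) = ((1 / 2 : ℝ) : ℂ) by push_cast; rfl,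
      ← Complex.ofReal_cpow (by positivity), ← Real.sqrt_eq_rpow, Real.sqrt_inv,
      Real.sqrt_sq hK.le]
  rw [h2] at h
  have h3 : (fun s => (gaussK K s : ℂ)) =
      fun s : ℝ => ((K⁻¹ : ℝ) : ℂ) • Complex.exp (-Real.pi * ((K ^ 2)⁻¹ : ℝ) * s ^ 2) := by
    ext s
    simp only [gaussK, smul_eq_mul]
    push_cast
    congr 2; ring
  have h4 : 𝓕 (fun s => (gaussK K s : ℂ)) t =
      ((K⁻¹ : ℝ) : ℂ) • 𝓕 (fun s : ℝ => Complex.exp (-Real.pi * ((K ^ 2)⁻¹ : ℝ) * s ^ 2)) t := by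
    rw [h3, Real.fourier_eq, Real.fourier_eq, ← integral_smul]
    congr 1; ext s
    exact smul_comm _ _ _
  rw [h4, h]
  have : (K : ℂ) ≠ 0 := by exact_mod_cast hK.ne'
  push_cast
  rw [smul_eq_mul]
  field_simp

lemma one_sub_exp_le (r : ℝ) (hr : 0 ≤ r) : 1 - Real.exp (-r) ≤ r ^ (1 / 3 : ℝ) := by
  have h1 := Real.add_one_le_exp (-r)
  have h2 := Real.exp_pos (-r)
  rcases le_total 1 r with h | h
  · have := Real.one_le_rpow h (z := 1 / 3) (by norm_num)
    linarith
  · have := Real.rpow_le_rpow_of_exponent_ge' hr h (z := 1 / 3) (y := 1) (by norm_num) (by norm_num)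
    rw [Real.rpow_one] at this
    linarith

/-- The height-one Gaussian of width `L` minus `L` times the normalized Gaussian of width
`√(L² + a⁻²)`. The subtracted term is at most `L a`, and the Fourier transform of the difference
vanishes to second order at `t = 0`, which compensates the singularity of the Airy kernels there. -/
def gdiff (L a s : ℝ) : ℝ := L * gaussK L s - L * gaussK (Real.sqrt (L ^ 2 + (a ^ 2)⁻¹)) s

lemma integrable_gdiff (L a : ℝ) (hL : 0 < L) (ha : 0 < a) : Integrable (gdiff L a) :=
  ((integrable_gaussK L hL).const_mul L).sub
    ((integrable_gaussK _ (Real.sqrt_pos.2 (by positivity))).const_mul L)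

lemma fourier_gdiff (L a t : ℝ) (hL : 0 < L) (ha : 0 < a) :
    𝓕 (fun s => (gdiff L a s : ℂ)) t =
      ((L * (Real.exp (-Real.pi * L ^ 2 * t ^ 2) * (1 - Real.exp (-(Real.pi * t ^ 2 / a ^ 2)))) : ℝ) : ℂ) := by
  set K := Real.sqrt (L ^ 2 + (a ^ 2)⁻¹) with hK
  have hK0 : 0 < K := Real.sqrt_pos.2 (by positivity)
  have hK2 : K ^ 2 = L ^ 2 + (a ^ 2)⁻¹ := Real.sq_sqrt (by positivity)
  have hi : ∀ K, 0 < K → Integrable (fun s => Real.fourierChar (-inner ℝ s t) • (gaussK K s : ℂ)) :=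
    fun K hK => (Real.fourierIntegral_convergent_iff (μ := volume) t).2 (integrable_gaussK K hK).ofReal
  have h1 : 𝓕 (fun s => (gdiff L a s : ℂ)) t =
      L * 𝓕 (fun s => (gaussK L s : ℂ)) t - L * 𝓕 (fun s => (gaussK K s : ℂ)) t := by
    simp only [Real.fourier_eq]
    rw [← integral_const_mul, ← integral_const_mul,
      ← integral_sub ((hi L hL).const_mul _) ((hi K hK0).const_mul _)]
    congr 1; ext s
    simp only [gdiff, Circle.smul_def, smul_eq_mul, ← hK]
    push_cast; ring
  rw [h1, fourier_gaussK _ _ hL, fourier_gaussK _ _ hK0, hK2, mul_sub, ← Real.exp_add]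
  have : -Real.pi * (L ^ 2 + (a ^ 2)⁻¹) * t ^ 2 =
    -Real.pi * L ^ 2 * t ^ 2 + -(Real.pi * t ^ 2 / a ^ 2) := by ring
  rw [this]
  push_cast; ring

/-- The factor `1 - exp (-π t² / a²) ≤ 2 (|t| / a)^{2/3}` cancels exactly the dispersive growth
`|t|^{-2/3}` of the two Airy kernels. -/
lemma fourier_boxMult_gdiff_le (L a R : ℝ) (hL : 0 < L) (ha : 0 < a) (hR : 0 ≤ R) (v : V3) :
    ‖𝓕 (fun ζ => (boxMult (gdiff L a) R ζ : ℂ)) v‖ ≤ 200 * L * a ^ (-(2 / 3) : ℝ) := by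
  rw [fourier_boxMult _ _ hR, fourier_gdiff _ _ _ hL ha]
  set t := (toProd v).1
  by_cases ht : t = 0
  · rw [ht]; simp; positivity
  have hA := airy_bound (toProd v).2.1 t R ht hR
  have hB := airy_bound (toProd v).2.2 t R ht hR
  have ht' : 0 < |t| := abs_pos.2 ht
  rw [norm_mul, norm_mul, Complex.norm_real, Real.norm_eq_abs]
  have hr : 0 ≤ Real.pi * t ^ 2 / a ^ 2 := by positivity
  have hE : 0 ≤ 1 - Real.exp (-(Real.pi * t ^ 2 / a ^ 2)) := by
    have : Real.exp (-(Real.pi * t ^ 2 / a ^ 2)) ≤ 1 := Real.exp_le_one_iff.2 (by linarith)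
    linarith
  have hE1 : Real.exp (-Real.pi * L ^ 2 * t ^ 2) ≤ 1 := Real.exp_le_one_iff.2 (by
    have : 0 ≤ Real.pi * L ^ 2 * t ^ 2 := by positivity
    linarith)
  have hE2 : 1 - Real.exp (-(Real.pi * t ^ 2 / a ^ 2)) ≤
      2 * (|t| ^ (2 / 3 : ℝ) * a ^ (-(2 / 3) : ℝ)) := by
    refine (one_sub_exp_le _ hr).trans ?_
    rw [mul_div_assoc, Real.mul_rpow Real.pi_pos.le (by positivity), Real.div_rpow (by positivity) (by positivity),
      ← sq_abs t, ← Real.rpow_natCast |t|, ← Real.rpow_natCast a, ← Real.rpow_mul ht'.le,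
      ← Real.rpow_mul ha.le, Real.rpow_neg ha.le, div_eq_mul_inv]
    norm_num
    have : Real.pi ^ (1 / 3 : ℝ) ≤ 2 := by
      have h8 : (2 : ℝ) = (8 : ℝ) ^ (1 / 3 : ℝ) := by
        rw [show (8 : ℝ) = 2 ^ (3 : ℝ) by norm_num, ← Real.rpow_mul (by norm_num)]; norm_num
      rw [h8]
      exact Real.rpow_le_rpow Real.pi_pos.le (by linarith [Real.pi_lt_four]) (by norm_num)
    have h0 : 0 ≤ |t| ^ (2 / 3 : ℝ) * (a ^ (2 / 3 : ℝ))⁻¹ := by positivity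
    exact mul_le_mul_of_nonneg_right this h0
  rw [abs_of_nonneg (by positivity)]
  have hprod : |t| ^ (2 / 3 : ℝ) * (|t| ^ (-(1 / 3) : ℝ) * |t| ^ (-(1 / 3) : ℝ)) = 1 := by
    rw [← Real.rpow_add ht', ← Real.rpow_add ht']; norm_num
  calc _ ≤ (L * (1 * (2 * (|t| ^ (2 / 3 : ℝ) * a ^ (-(2 / 3) : ℝ))))) *
        ((10 * |t| ^ (-(1 / 3) : ℝ)) * (10 * |t| ^ (-(1 / 3) : ℝ))) := by gcongr
    _ = 200 * L * a ^ (-(2 / 3) : ℝ) *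
      (|t| ^ (2 / 3 : ℝ) * (|t| ^ (-(1 / 3) : ℝ) * |t| ^ (-(1 / 3) : ℝ))) := by ring
    _ = _ := by rw [hprod, mul_one]

/-! ### The weighted restriction estimate and duality -/

lemma boxMult_nonneg (h : ℝ → ℝ) (hh : ∀ s, 0 ≤ h s) (R : ℝ) (v : V3) : 0 ≤ boxMult h R v := by
  unfold boxMult
  have h1 : ∀ ξ, 0 ≤ (Set.Icc (-R) R).indicator (fun _ => (1 : ℝ)) ξ :=
    fun ξ => Set.indicator_nonneg (fun _ _ => zero_le_one) _
  exact mul_nonneg (hh _) (mul_nonneg (h1 _) (h1 _))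

lemma boxMult_le (h : ℝ → ℝ) (hh : ∀ s, 0 ≤ h s) (c : ℝ) (hc : ∀ s, h s ≤ c) (R : ℝ) (v : V3) :
    boxMult h R v ≤ c := by
  unfold boxMult
  have h0 : ∀ ξ, 0 ≤ (Set.Icc (-R) R).indicator (fun _ => (1 : ℝ)) ξ :=
    fun ξ => Set.indicator_nonneg (fun _ _ => zero_le_one) _
  have h1 : ∀ ξ, (Set.Icc (-R) R).indicator (fun _ => (1 : ℝ)) ξ ≤ 1 :=
    fun ξ => Set.indicator_le_self' (fun _ _ => zero_le_one) _
  have hc0 : 0 ≤ c := (hh 0).trans (hc 0)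
  calc _ ≤ c * (1 * 1) := by
        gcongr
        · exact mul_nonneg (h0 _) (h0 _)
        · exact hc _
        · exact h0 _
        · exact h1 _
        · exact h1 _
    _ = c := by ring

lemma gaussK_nonneg (K : ℝ) (hK : 0 < K) (s : ℝ) : 0 ≤ gaussK K s := by
  unfold gaussK; positivity

lemma gaussK_le (K : ℝ) (hK : 0 < K) (s : ℝ) : gaussK K s ≤ K⁻¹ := by
  unfold gaussK
  have : Real.exp (-Real.pi * (s / K) ^ 2) ≤ 1 := Real.exp_le_one_iff.2 (by
    have : 0 ≤ Real.pi * (s / K) ^ 2 := by positivity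
    linarith)
  exact mul_le_of_le_one_right (by positivity) this

lemma integrable_norm_sq (f : 𝓢(V3, ℂ)) : Integrable (fun x => ‖f x‖ ^ 2) :=
  (memLp_two_iff_integrable_sq_norm f.continuous.aestronglyMeasurable).1 (f.memLp 2 volume)

lemma integrable_mul_fourier (m : V3 → ℝ) (hm : Integrable m) (g : 𝓢(V3, ℂ)) :
    Integrable (fun ζ => m ζ * ‖𝓕 g ζ‖ ^ 2) := by
  refine hm.mul_bdd (c := ‖(𝓕 g).toBoundedContinuousFunction‖ ^ 2)
    ((𝓕 g).continuous.norm.pow 2).aestronglyMeasurable ?_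
  refine Filter.Eventually.of_forall fun ζ => ?_
  rw [norm_pow, norm_norm]
  exact pow_le_pow_left₀ (norm_nonneg _) ((𝓕 g).toBoundedContinuousFunction.norm_coe_le_norm ζ) 2

/-- A restriction estimate for the Gaussian weight around the dispersive surface, with a free
parameter `a`: the wide Gaussian is estimated by Plancherel, the difference `gdiff` by
`multiplier_bound`. -/
lemma weighted_bound (L a R : ℝ) (hL : 0 < L) (ha : 0 < a) (hR : 0 ≤ R) (g : 𝓢(V3, ℂ)) :
    ∫ ζ, boxMult (fun s => L * gaussK L s) R ζ * ‖𝓕 g ζ‖ ^ 2 ≤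
      L * (a * ∫ x, ‖g x‖ ^ 2) + 200 * L * a ^ (-(2 / 3) : ℝ) * (∫ x, ‖g x‖) ^ 2 := by
  set K := Real.sqrt (L ^ 2 + (a ^ 2)⁻¹) with hK
  have hK0 : 0 < K := Real.sqrt_pos.2 (by positivity)
  have hKa : K⁻¹ ≤ a := by
    rw [inv_le_comm₀ hK0 ha]
    refine Real.le_sqrt_of_sq_le ?_
    rw [inv_pow]
    have := sq_nonneg L
    linarith
  have hsplit : ∀ ζ, boxMult (fun s => L * gaussK L s) R ζ * ‖𝓕 g ζ‖ ^ 2 =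
      boxMult (gdiff L a) R ζ * ‖𝓕 g ζ‖ ^ 2 + boxMult (fun s => L * gaussK K s) R ζ * ‖𝓕 g ζ‖ ^ 2 := by
    intro ζ
    simp only [boxMult, gdiff, ← hK]; ring
  have hi1 := integrable_mul_fourier _ (integrable_boxMult _ (integrable_gdiff L a hL ha) R) g
  have hi2 := integrable_mul_fourier _
    (integrable_boxMult _ ((integrable_gaussK K hK0).const_mul L) R) g
  simp only [hsplit]
  rw [integral_add hi1 hi2]
  have h1 := multiplier_bound _ (integrable_boxMult _ (integrable_gdiff L a hL ha) R) _
    (fourier_boxMult_gdiff_le L a R hL ha hR) g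
  have h2 : ∫ ζ, boxMult (fun s => L * gaussK K s) R ζ * ‖𝓕 g ζ‖ ^ 2 ≤
      ∫ ζ, L * a * ‖𝓕 g ζ‖ ^ 2 := by
    refine integral_mono hi2 ((integrable_norm_sq (𝓕 g)).const_mul _) fun ζ => ?_
    refine mul_le_mul_of_nonneg_right ?_ (by positivity)
    refine boxMult_le _ (fun s => mul_nonneg hL.le (gaussK_nonneg K hK0 s)) _ (fun s => ?_) R ζ
    exact mul_le_mul_of_nonneg_left ((gaussK_le K hK0 s).trans hKa) hL.le
  rw [integral_const_mul, SchwartzMap.integral_norm_sq_fourier] at h2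
  have := le_abs_self (∫ ζ, boxMult (gdiff L a) R ζ * ‖𝓕 g ζ‖ ^ 2)
  linarith

/-- The Fourier transform of `u` vanishes off the box `|ξ|, |η| ≤ R` and off the region of
modulation at most `L`. Vanishing is required pointwise, so no closure is taken. -/
def SuppIn (L R : ℝ) (u : 𝓢(V3, ℂ)) : Prop :=
  ∀ ζ : V3, 𝓕 u ζ ≠ 0 → (toProd ζ).2.1 ∈ Set.Icc (-R) R ∧ (toProd ζ).2.2 ∈ Set.Icc (-R) R ∧
    |(toProd ζ).1 - disp (toProd ζ).2| ≤ L

/-- Pairing with a test function `g`: on the Fourier support of `u` the weight of `weighted_bound` is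
at least `e^{-π}`, so a weighted Cauchy–Schwarz inequality (in discriminant form) applies. -/
lemma duality_bound (L a R : ℝ) (hL : 0 < L) (ha : 0 < a) (hR : 0 ≤ R) (u g : 𝓢(V3, ℂ))
    (hu : SuppIn L R u) :
    ‖∫ x, inner ℂ (g x) (u x)‖ ^ 2 ≤ (Real.exp Real.pi *
      (L * (a * ∫ x, ‖g x‖ ^ 2) + 200 * L * a ^ (-(2 / 3) : ℝ) * (∫ x, ‖g x‖) ^ 2)) *
      ∫ x, ‖u x‖ ^ 2 := by
  set W : V3 → ℝ := boxMult (fun s => L * gaussK L s) R with hW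
  have hW0 : ∀ ζ, 0 ≤ W ζ := boxMult_nonneg _ (fun s => mul_nonneg hL.le (gaussK_nonneg L hL s)) R
  have hW1 : ∀ ζ, 𝓕 u ζ ≠ 0 → 1 ≤ Real.exp Real.pi * W ζ := by
    intro ζ hζ
    obtain ⟨h1, h2, h3⟩ := hu ζ hζ
    simp only [hW, boxMult, gaussK, Set.indicator_of_mem h1, Set.indicator_of_mem h2, mul_one]
    rw [mul_inv_cancel_left₀ hL.ne', ← Real.exp_add]
    refine Real.one_le_exp ?_
    have : (((toProd ζ).1 - disp (toProd ζ).2) / L) ^ 2 ≤ 1 := by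
      rw [sq_le_one_iff_abs_le_one, abs_div, abs_of_pos hL]
      exact div_le_one_of_le₀ h3 hL.le
    nlinarith [Real.pi_pos]
  have hiW := integrable_mul_fourier W
    (integrable_boxMult _ ((integrable_gaussK L hL).const_mul L) R) g
  have hiu := integrable_norm_sq (𝓕 u)
  have higu : Integrable (fun ζ => ‖𝓕 g ζ‖ * ‖𝓕 u ζ‖) :=
    ((𝓕 g).memLp 2 volume).norm.integrable_mul ((𝓕 u).memLp 2 volume).norm
  set J := ∫ ζ, ‖𝓕 g ζ‖ * ‖𝓕 u ζ‖ with hJ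
  have hJle : ‖∫ x, inner ℂ (g x) (u x)‖ ≤ J := by
    rw [← SchwartzMap.integral_inner_fourier_fourier]
    refine (norm_integral_le_integral_norm _).trans ?_
    refine integral_mono_of_nonneg (Filter.Eventually.of_forall fun _ => norm_nonneg _) higu
      (Filter.Eventually.of_forall fun ζ => norm_inner_le_norm _ _)
  have hJ0 : 0 ≤ J := (norm_nonneg _).trans hJle
  have hdisc : ∀ r : ℝ, 0 ≤ (Real.exp Real.pi * ∫ ζ, W ζ * ‖𝓕 g ζ‖ ^ 2) * (r * r) + (-(2 * J)) * r +
      ∫ x, ‖u x‖ ^ 2 := by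
    intro r
    have h0 : 0 ≤ ∫ ζ, (Real.exp Real.pi * (r * r) * (W ζ * ‖𝓕 g ζ‖ ^ 2) -
        2 * r * (‖𝓕 g ζ‖ * ‖𝓕 u ζ‖) + ‖𝓕 u ζ‖ ^ 2) := by
      refine integral_nonneg fun ζ => ?_
      by_cases h : 𝓕 u ζ = 0
      · have := hW0 ζ
        have := mul_self_nonneg r
        simp only [h, norm_zero, mul_zero, sub_zero, Pi.zero_apply]
        positivity
      · have h1 := hW1 ζ h
        have h2 : 0 ≤ (r * ‖𝓕 g ζ‖) ^ 2 * (Real.exp Real.pi * W ζ - 1) :=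
          mul_nonneg (sq_nonneg _) (by linarith)
        have h3 := sq_nonneg (r * ‖𝓕 g ζ‖ - ‖𝓕 u ζ‖)
        simp only [Pi.zero_apply]
        nlinarith
    have hsub : Integrable (fun ζ => Real.exp Real.pi * (r * r) * (W ζ * ‖𝓕 g ζ‖ ^ 2) -
        2 * r * (‖𝓕 g ζ‖ * ‖𝓕 u ζ‖)) := (hiW.const_mul _).sub (higu.const_mul _)
    rw [integral_add hsub hiu,
      integral_sub (hiW.const_mul _) (higu.const_mul _), integral_const_mul, integral_const_mul,
      SchwartzMap.integral_norm_sq_fourier] at h0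
    linarith
  have hd := discrim_le_zero hdisc
  rw [discrim] at hd
  have hw := weighted_bound L a R hL ha hR g
  have hU : 0 ≤ ∫ x, ‖u x‖ ^ 2 := integral_nonneg fun _ => by positivity
  calc _ ≤ J ^ 2 := pow_le_pow_left₀ (norm_nonneg _) hJle 2
    _ ≤ (Real.exp Real.pi * ∫ ζ, W ζ * ‖𝓕 g ζ‖ ^ 2) * ∫ x, ‖u x‖ ^ 2 := by nlinarith
    _ ≤ _ := by gcongr

/-! ### The weak-type estimate -/

/-- A smooth version `g = θ u` of the restriction of `u` to the level set `{‖u‖ ≥ lam}`. It has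
compact support because `u` vanishes at infinity. -/
lemma truncation (u : 𝓢(V3, ℂ)) (lam : ℝ) (hlam : 0 < lam) :
    ∃ (θ : V3 → ℝ) (g : 𝓢(V3, ℂ)), Continuous θ ∧ (∀ x, g x = (θ x : ℂ) * u x) ∧ (∀ x, 0 ≤ θ x) ∧ (∀ x, θ x ≤ 1) ∧
      (∀ x, lam ≤ ‖u x‖ → θ x = 1) ∧ (∀ x, θ x ≠ 0 → lam / 2 ≤ ‖u x‖) := by
  set θ : V3 → ℝ := fun x => Real.smoothTransition (2 * ‖u x‖ ^ 2 / lam ^ 2 - 1) with hθ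
  have hsm : ContDiff ℝ (⊤ : ℕ∞) θ := by
    refine Real.smoothTransition.contDiff.comp ?_
    have : ContDiff ℝ (⊤ : ℕ∞) (fun x => ‖u x‖ ^ 2) := (u.smooth ⊤).norm_sq ℝ
    exact ((contDiff_const.mul this).div_const _).sub contDiff_const
  have hsupp : ∀ x, θ x ≠ 0 → lam / 2 ≤ ‖u x‖ := by
    intro x hx
    by_contra! hlt
    refine hx (Real.smoothTransition.zero_of_nonpos ?_)
    have : ‖u x‖ ^ 2 ≤ (lam / 2) ^ 2 := pow_le_pow_left₀ (norm_nonneg _) hlt.le 2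
    rw [sub_nonpos, div_le_one (by positivity)]
    nlinarith
  have hcomp : HasCompactSupport (fun x => (θ x : ℂ) * u x) := by
    have hz : Filter.Tendsto u (Filter.cocompact V3) (nhds 0) :=
      SchwartzMap.tendsto_cocompact u
    have hev : ∀ᶠ x in Filter.cocompact V3, ‖u x‖ < lam / 2 := by
      have := hz.norm
      rw [norm_zero] at this
      exact this.eventually_lt_const (by positivity)
    obtain ⟨K, hK, hKs⟩ := Filter.mem_cocompact.1 hev
    refine HasCompactSupport.intro hK fun x hx => ?_
    have h1 : ‖u x‖ < lam / 2 := hKs hx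
    have : θ x = 0 := by
      by_contra h
      linarith [hsupp x h]
    simp [this]
  have hsm2 : ContDiff ℝ (⊤ : ℕ∞) (fun x => (θ x : ℂ) * u x) :=
    (Complex.ofRealCLM.contDiff.comp hsm).mul (u.smooth ⊤)
  refine ⟨θ, hcomp.toSchwartzMap hsm2, hsm.continuous, fun x => rfl, fun x => Real.smoothTransition.nonneg _,
    fun x => Real.smoothTransition.le_one _, fun x hx => Real.smoothTransition.one_of_one_le ?_,
    hsupp⟩
  have : lam ^ 2 ≤ ‖u x‖ ^ 2 := pow_le_pow_left₀ hlam.le hx 2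
  have h2 : 1 ≤ ‖u x‖ ^ 2 / lam ^ 2 := (one_le_div (by positivity)).2 this
  rw [mul_div_assoc]; linarith

/-- The weak-type bound: with `g` the truncation of `u` at height `lam`, the pairing of `g` with `u`
dominates both `‖g‖₂²` and `(lam / 2) ‖g‖₁`, so `duality_bound` becomes an inequality for the mass
of `u` on its level set alone. -/
lemma level_bound (L R lam : ℝ) (hL : 0 < L) (hR : 0 ≤ R) (hlam : 0 < lam) (u : 𝓢(V3, ℂ))
    (hu : SuppIn L R u) (hU : 0 < ∫ x, ‖u x‖ ^ 2) :
    ∫ x in {x | lam ≤ ‖u x‖}, ‖u x‖ ^ 2 ≤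
      128000 * (Real.exp Real.pi * (L * ∫ x, ‖u x‖ ^ 2)) ^ (5 / 2 : ℝ) * lam ^ (-3 : ℝ) := by
  obtain ⟨θ, g, hθc, hg, hθ0, hθ1, hθe, hθs⟩ := truncation u lam hlam
  set U := ∫ x, ‖u x‖ ^ 2 with hUdef
  have hiu := integrable_norm_sq u
  have hiθ : Integrable (fun x => θ x * ‖u x‖ ^ 2) := by
    refine hiu.bdd_mul (c := 1) hθc.aestronglyMeasurable (Filter.Eventually.of_forall fun x => ?_)
    rw [Real.norm_eq_abs, abs_of_nonneg (hθ0 x)]; exact hθ1 x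
  set I := ∫ x, θ x * ‖u x‖ ^ 2 with hI
  have hI0 : 0 ≤ I := integral_nonneg fun x => mul_nonneg (hθ0 x) (sq_nonneg _)
  have hle : ∫ x in {x | lam ≤ ‖u x‖}, ‖u x‖ ^ 2 ≤ I := by
    have hms : MeasurableSet {x | lam ≤ ‖u x‖} :=
      (isClosed_le continuous_const u.continuous.norm).measurableSet
    rw [← integral_indicator hms]
    refine integral_mono (hiu.indicator hms) hiθ fun x => ?_
    by_cases hx : lam ≤ ‖u x‖
    · rw [Set.indicator_of_mem (by exact hx)]; simp [hθe x hx]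
    · rw [Set.indicator_of_notMem (by exact hx)]
      exact mul_nonneg (hθ0 x) (sq_nonneg _)
  refine hle.trans ?_
  rcases hI0.eq_or_lt with hz | hIpos
  · rw [← hz]; positivity
  have hng : ∀ x, ‖g x‖ = θ x * ‖u x‖ := fun x => by
    rw [hg, norm_mul, Complex.norm_real, Real.norm_eq_abs, abs_of_nonneg (hθ0 x)]
  have hin : ‖∫ x, inner ℂ (g x) (u x)‖ = I := by
    have : ∫ x, inner ℂ (g x) (u x) = ((I : ℝ) : ℂ) := by
      rw [hI, ← integral_complex_ofReal]
      congr 1; ext x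
      rw [hg, RCLike.inner_apply, map_mul, Complex.conj_ofReal]
      have := Complex.conj_mul' (u x)
      push_cast
      rw [← this]; ring
    rw [this, Complex.norm_real, Real.norm_eq_abs, abs_of_nonneg hI0]
  have hg2 : ∫ x, ‖g x‖ ^ 2 ≤ I := by
    refine integral_mono (integrable_norm_sq g) hiθ fun x => ?_
    simp only [hng, mul_pow]
    refine mul_le_mul_of_nonneg_right ?_ (sq_nonneg _)
    nlinarith [hθ0 x, hθ1 x]
  have hg1 : ∫ x, ‖g x‖ ≤ 2 / lam * I := by
    rw [hI, ← integral_const_mul]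
    refine integral_mono g.integrable.norm (hiθ.const_mul _) fun x => ?_
    simp only [hng]
    by_cases h : θ x = 0
    · simp [h]
    have h1 := hθs x h
    have h2 : 1 ≤ 2 / lam * ‖u x‖ := by
      rw [div_mul_eq_mul_div, one_le_div hlam]; linarith
    have h3 : 0 ≤ θ x * ‖u x‖ := mul_nonneg (hθ0 x) (norm_nonneg _)
    nlinarith
  set Q := Real.exp Real.pi * (L * U) with hQ
  have hQ0 : 0 < Q := by positivity
  -- this choice lets the `L²` term of `duality_bound` absorb exactly half of `I ^ 2`
  set a := I / (2 * Q) with ha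
  have ha0 : 0 < a := by positivity
  have hd := duality_bound L a R hL ha0 hR u g hu
  rw [hin] at hd
  set b := a ^ (-(2 / 3) : ℝ) with hb
  have hb0 : 0 < b := by positivity
  have hg10 : 0 ≤ ∫ x, ‖g x‖ := integral_nonneg fun _ => norm_nonneg _
  have hd2 : I ^ 2 ≤ Q * (a * I + 200 * b * (2 / lam * I) ^ 2) := by
    calc _ ≤ _ := hd
      _ ≤ (Real.exp Real.pi * (L * (a * I) + 200 * L * b * (2 / lam * I) ^ 2)) * U := by
        gcongr
      _ = _ := by rw [hQ]; ring
  have hd3 : 1 ≤ 1600 * Q / lam ^ 2 * b := by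
    have h1 : Q * (a * I) = I ^ 2 / 2 := by rw [ha]; field_simp
    have h2 : I ^ 2 * 1 ≤ I ^ 2 * (1600 * Q / lam ^ 2 * b) := by
      have : Q * (200 * b * (2 / lam * I) ^ 2) = I ^ 2 * (1600 * Q / lam ^ 2 * b) / 2 := by
        field_simp; ring
      nlinarith
    exact le_of_mul_le_mul_left h2 (by positivity)
  have hd4 : a ^ (2 / 3 : ℝ) ≤ 1600 * Q / lam ^ 2 := by
    rw [hb, Real.rpow_neg ha0.le, ← div_eq_mul_inv, one_le_div (by positivity)] at hd3
    exact hd3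
  have hd5 : a ≤ (1600 * Q / lam ^ 2) ^ (3 / 2 : ℝ) := by
    have := Real.rpow_le_rpow (by positivity) hd4 (z := 3 / 2) (by norm_num)
    rwa [← Real.rpow_mul ha0.le, show (2 / 3 * (3 / 2) : ℝ) = 1 by norm_num, Real.rpow_one] at this
  have hd6 : (1600 * Q / lam ^ 2) ^ (3 / 2 : ℝ) = 64000 * Q ^ (3 / 2 : ℝ) * lam ^ (-3 : ℝ) := by
    rw [Real.div_rpow (by positivity) (by positivity), Real.mul_rpow (by norm_num) hQ0.le,
      ← Real.rpow_natCast lam, ← Real.rpow_mul hlam.le, Real.rpow_neg hlam.le,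
      show (1600 : ℝ) = 40 ^ (2 : ℝ) by norm_num, ← Real.rpow_mul (by norm_num)]
    norm_num
    rw [div_eq_mul_inv]
  have hIe : I = a * (2 * Q) := by rw [ha]; field_simp
  rw [hd6] at hd5
  calc I = a * (2 * Q) := hIe
    _ ≤ 64000 * Q ^ (3 / 2 : ℝ) * lam ^ (-3 : ℝ) * (2 * Q) := by gcongr
    _ = 128000 * (Q ^ (3 / 2 : ℝ) * Q ^ (1 : ℝ)) * lam ^ (-3 : ℝ) := by rw [Real.rpow_one]; ring
    _ = _ := by rw [← Real.rpow_add hQ0]; norm_num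

/-! ### Summation over level sets -/

/-- Layer-cake summation of a level-set estimate: the trivial bound is used below the height `A`
and the cubic decay above it. -/
lemma layer_cake {α : Type*} [MeasurableSpace α] (ν : Measure α) (f : α → ℝ) (hf : Measurable f)
    (hf0 : ∀ x, 0 ≤ f x) (q U D A : ℝ) (hq : 0 < q) (hq3 : q < 3) (hU : 0 ≤ U) (hD : 0 ≤ D)
    (hA : 0 < A) (h1 : ∀ t, 0 < t → ν {x | t ≤ f x} ≤ ENNReal.ofReal U)
    (h2 : ∀ t, 0 < t → ν {x | t ≤ f x} ≤ ENNReal.ofReal (D * t ^ (-3 : ℝ))) :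
    ∫⁻ x, ENNReal.ofReal (f x ^ q) ∂ν ≤
      ENNReal.ofReal (U * A ^ q + q * D * A ^ (q - 3) / (3 - q)) := by
  rw [lintegral_rpow_eq_lintegral_meas_le_mul ν (Filter.Eventually.of_forall hf0) hf.aemeasurable hq,
    ← Set.Ioc_union_Ioi_eq_Ioi hA.le,
    lintegral_union measurableSet_Ioi (Set.Ioc_disjoint_Ioi le_rfl)]
  have e1 : ∫⁻ t in Set.Ioc 0 A, ν {a | t ≤ f a} * ENNReal.ofReal (t ^ (q - 1)) ≤
      ENNReal.ofReal (U * (A ^ q / q)) := by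
    have hInt : IntegrableOn (fun t : ℝ => t ^ (q - 1)) (Set.Ioc 0 A) :=
      (intervalIntegral.intervalIntegrable_rpow' (by linarith)).1
    have hval : ∫ t in Set.Ioc 0 A, t ^ (q - 1) = A ^ q / q := by
      rw [← intervalIntegral.integral_of_le hA.le, integral_rpow (Or.inl (by linarith))]
      simp [Real.zero_rpow hq.ne']
    calc _ ≤ ∫⁻ t in Set.Ioc 0 A, ENNReal.ofReal (U * t ^ (q - 1)) := by
          refine setLIntegral_mono' measurableSet_Ioc fun t ht => ?_
          rw [ENNReal.ofReal_mul hU]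
          gcongr
          exact h1 t ht.1
      _ = ENNReal.ofReal (∫ t in Set.Ioc 0 A, U * t ^ (q - 1)) := by
          rw [ofReal_integral_eq_lintegral_ofReal (hInt.const_mul U)]
          refine (ae_restrict_iff' measurableSet_Ioc).2 (Filter.Eventually.of_forall fun t ht => ?_)
          exact mul_nonneg hU (Real.rpow_nonneg ht.1.le _)
      _ = _ := by rw [integral_const_mul, hval]
  have e2 : ∫⁻ t in Set.Ioi A, ν {a | t ≤ f a} * ENNReal.ofReal (t ^ (q - 1)) ≤
      ENNReal.ofReal (D * (A ^ (q - 3) / (3 - q))) := by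
    have hInt : IntegrableOn (fun t : ℝ => t ^ (q - 4)) (Set.Ioi A) :=
      integrableOn_Ioi_rpow_of_lt (by linarith) hA
    have hval : ∫ t in Set.Ioi A, t ^ (q - 4) = A ^ (q - 3) / (3 - q) := by
      rw [integral_Ioi_rpow_of_lt (by linarith) hA, show q - 4 + 1 = q - 3 by ring,
        show 3 - q = -(q - 3) by ring, div_neg, neg_div]
    calc _ ≤ ∫⁻ t in Set.Ioi A, ENNReal.ofReal (D * t ^ (q - 4)) := by
          refine setLIntegral_mono' measurableSet_Ioi fun t ht => ?_
          have ht0 : 0 < t := hA.trans ht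
          have : D * t ^ (q - 4) = (D * t ^ (-3 : ℝ)) * t ^ (q - 1) := by
            rw [mul_assoc, ← Real.rpow_add ht0]; congr 2; ring
          rw [this, ENNReal.ofReal_mul (by positivity)]
          gcongr
          exact h2 t ht0
      _ = ENNReal.ofReal (∫ t in Set.Ioi A, D * t ^ (q - 4)) := by
          rw [ofReal_integral_eq_lintegral_ofReal (hInt.const_mul D)]
          refine (ae_restrict_iff' measurableSet_Ioi).2 (Filter.Eventually.of_forall fun t ht => ?_)
          exact mul_nonneg hD (Real.rpow_nonneg (hA.trans ht).le _)
      _ = _ := by rw [integral_const_mul, hval]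
  have h3q : 0 < 3 - q := by linarith
  calc _ ≤ ENNReal.ofReal q * (ENNReal.ofReal (U * (A ^ q / q)) +
        ENNReal.ofReal (D * (A ^ (q - 3) / (3 - q)))) := by gcongr
    _ = _ := by
      rw [← ENNReal.ofReal_add (by positivity) (by positivity), ← ENNReal.ofReal_mul hq.le]
      congr 1
      field_simp

/-- The `L^{q+2}` bound on the model space, `0 < q < 3`. The height `A = L^{5/6} U^{1/2}` balances
the two level-set bounds. -/
lemma lp_bound (q L R : ℝ) (hq : 0 < q) (hq3 : q < 3) (hL : 0 < L) (hR : 0 ≤ R) (u : 𝓢(V3, ℂ))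
    (hu : SuppIn L R u) (hU : 0 < ∫ x, ‖u x‖ ^ 2) :
    ∫⁻ x, ENNReal.ofReal (‖u x‖ ^ (q + 2)) ≤
      ENNReal.ofReal ((1 + q * (128000 * Real.exp Real.pi ^ (5 / 2 : ℝ)) / (3 - q)) *
        ((∫ x, ‖u x‖ ^ 2) * (L ^ (5 / 6 : ℝ) * (∫ x, ‖u x‖ ^ 2) ^ (1 / 2 : ℝ)) ^ q)) := by
  set U := ∫ x, ‖u x‖ ^ 2 with hUdef
  set A := L ^ (5 / 6 : ℝ) * U ^ (1 / 2 : ℝ) with hA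
  set K := 128000 * Real.exp Real.pi ^ (5 / 2 : ℝ) with hK
  have hApos : 0 < A := by positivity
  have hK0 : 0 < K := by positivity
  have hInt : Integrable (fun x => ‖u x‖ ^ 2) := integrable_norm_sq u
  have hmeas : Measurable (fun x => ENNReal.ofReal (‖u x‖ ^ 2)) :=
    ((u.continuous.norm.pow 2).measurable).ennreal_ofReal
  have hset : ∀ t : ℝ, MeasurableSet {x | t ≤ ‖u x‖} := fun t =>
    measurableSet_le measurable_const u.continuous.norm.measurable
  have hν : ∀ t : ℝ, (volume.withDensity fun x => ENNReal.ofReal (‖u x‖ ^ 2)) {x | t ≤ ‖u x‖} =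
      ENNReal.ofReal (∫ x in {x | t ≤ ‖u x‖}, ‖u x‖ ^ 2) := by
    intro t
    rw [withDensity_apply _ (hset t), ofReal_integral_eq_lintegral_ofReal hInt.integrableOn]
    exact Filter.Eventually.of_forall fun x => by positivity
  have hDA : 128000 * (Real.exp Real.pi * (L * U)) ^ (5 / 2 : ℝ) = K * U * A ^ (3 : ℝ) := by
    rw [hK, hA, Real.mul_rpow (by positivity) (by positivity), Real.mul_rpow hL.le hU.le,
      Real.mul_rpow (by positivity) (by positivity), ← Real.rpow_mul hL.le, ← Real.rpow_mul hU.le]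
    have : U ^ (5 / 2 : ℝ) = U * U ^ (1 / 2 * 3 : ℝ) := by
      nth_rewrite 2 [← Real.rpow_one U]
      rw [← Real.rpow_add hU]; norm_num
    rw [this]; norm_num; ring
  have key := layer_cake (volume.withDensity fun x => ENNReal.ofReal (‖u x‖ ^ 2)) (fun x => ‖u x‖)
    u.continuous.norm.measurable (fun x => norm_nonneg _) q U (K * U * A ^ (3 : ℝ)) A hq hq3 hU.le
    (by positivity) hApos
    (fun t ht => by
      rw [hν t]
      exact ENNReal.ofReal_le_ofReal
        (setIntegral_le_integral hInt (Filter.Eventually.of_forall fun x => by positivity)))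
    (fun t ht => by
      rw [hν t, ← hDA]
      exact ENNReal.ofReal_le_ofReal (level_bound L R t hL hR ht u hu hU))
  rw [lintegral_withDensity_eq_lintegral_mul _ hmeas
    ((u.continuous.norm.measurable.pow_const q).ennreal_ofReal)] at key
  have h3q : 0 < 3 - q := by linarith
  calc _ = ∫⁻ x, ((fun x => ENNReal.ofReal (‖u x‖ ^ 2)) * fun x => ENNReal.ofReal (‖u x‖ ^ q)) x := by
        refine lintegral_congr fun x => ?_
        rw [Pi.mul_apply, ← ENNReal.ofReal_mul (by positivity), add_comm,
          Real.rpow_add_of_nonneg (norm_nonneg _) (by norm_num) hq.le, Real.rpow_two]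
    _ ≤ _ := key
    _ = _ := by
      congr 1
      have : A ^ (3 : ℝ) * A ^ (q - 3) = A ^ q := by
        rw [← Real.rpow_add hApos]; congr 1; ring
      rw [← this]; field_simp

/-! ### Transfer to the product space -/

/-- Carrying `u` over to `V3` turns `ftt`, with kernel `e^{-i⟨·,·⟩}`, into `𝓕`, with kernel
`e^{-2πi⟨·,·⟩}`; the frequencies are rescaled by `2π`. -/
lemma fourier_transplant (u : 𝓢(ℝ × ℝ × ℝ, ℂ)) (ζ : V3) :
    𝓕 (SchwartzMap.compCLMOfContinuousLinearEquiv ℂ toProd u) ζ =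
      ftt (fun t x y => u (t, x, y)) (2 * Real.pi * (toProd ζ).1) (2 * Real.pi * (toProd ζ).2.1)
        (2 * Real.pi * (toProd ζ).2.2) := by
  rw [SchwartzMap.fourier_coe, Real.fourier_eq']
  set F : ℝ × ℝ × ℝ → ℂ := fun v => Complex.exp (-Complex.I *
    ((v.1 * (2 * Real.pi * (toProd ζ).1) + v.2.1 * (2 * Real.pi * (toProd ζ).2.1) +
      v.2.2 * (2 * Real.pi * (toProd ζ).2.2) : ℝ) : ℂ)) * u v with hF
  have hcont : Continuous F := by
    have := u.continuous
    fun_prop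
  have hInt : Integrable F := by
    have hu : Integrable (fun v => u v) :=
      (mp_toProd.integrable_comp_emb me_toProd).1
        (SchwartzMap.compCLMOfContinuousLinearEquiv ℂ toProd u).integrable
    refine hu.mono hcont.aestronglyMeasurable (Filter.Eventually.of_forall fun v => ?_)
    rw [hF, norm_mul, neg_mul, ← mul_neg, mul_comm Complex.I, ← Complex.ofReal_neg,
      Complex.norm_exp_ofReal_mul_I, one_mul]
  have e1 : ∀ v : V3, Complex.exp (((-2 * Real.pi * inner ℝ v ζ : ℝ) : ℂ) * Complex.I) •
      (SchwartzMap.compCLMOfContinuousLinearEquiv ℂ toProd u) v = F (toProd v) := by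
    intro v
    rw [hF, inner_toProd, smul_eq_mul]
    simp only [SchwartzMap.compCLMOfContinuousLinearEquiv_apply, Function.comp_apply]
    congr 2
    push_cast
    ring
  rw [integral_congr_ae (Filter.Eventually.of_forall e1), mp_toProd.integral_comp me_toProd F,
    Measure.volume_eq_prod, integral_prod F hInt, ftt]
  refine integral_congr_ae ?_
  filter_upwards [hInt.prod_right_ae] with t ht
  rw [Measure.volume_eq_prod, integral_prod _ ht]

lemma suppIn_transplant (N L : ℝ) (hN : 0 < N) (hL : 0 < L) (u : 𝓢(ℝ × ℝ × ℝ, ℂ))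
    (h : ∀ τ ξ η : ℝ, ftt (fun t x y => u (t, x, y)) τ ξ η ≠ 0 →
      Real.sqrt (ξ ^ 2 + η ^ 2) ≤ 2 * N ∧ |τ - ξ ^ 3 - η ^ 3| ≤ 2 * L) :
    SuppIn L N (SchwartzMap.compCLMOfContinuousLinearEquiv ℂ toProd u) := by
  intro ζ hζ
  rw [fourier_transplant] at hζ
  obtain ⟨h1, h2⟩ := h _ _ _ hζ
  have hpi := Real.pi_gt_three
  have aux : ∀ s : ℝ, |2 * Real.pi * s| ≤ 2 * N → s ∈ Set.Icc (-N) N := by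
    intro s hs
    rw [abs_mul, abs_of_pos (by positivity)] at hs
    rw [Set.mem_Icc, ← abs_le]
    nlinarith [abs_nonneg s]
  refine ⟨aux _ (le_trans (Real.abs_le_sqrt ?_) h1), aux _ (le_trans (Real.abs_le_sqrt ?_) h1), ?_⟩
  · nlinarith [sq_nonneg (2 * Real.pi * (toProd ζ).2.2)]
  · nlinarith [sq_nonneg (2 * Real.pi * (toProd ζ).2.1)]
  · have : 2 * Real.pi * (toProd ζ).1 - (2 * Real.pi * (toProd ζ).2.1) ^ 3 -
        (2 * Real.pi * (toProd ζ).2.2) ^ 3 =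
        2 * Real.pi * ((toProd ζ).1 - disp (toProd ζ).2) := by
      rw [disp]; ring
    rw [this, abs_mul, abs_of_pos (by positivity)] at h2
    nlinarith [abs_nonneg ((toProd ζ).1 - disp (toProd ζ).2)]

lemma lpnorm3_transplant (r : ℝ) (hr : 0 ≤ r) (u : 𝓢(ℝ × ℝ × ℝ, ℂ)) :
    lpnorm3 r (fun t x y => u (t, x, y)) =
      (∫⁻ v : V3, ENNReal.ofReal
        (‖SchwartzMap.compCLMOfContinuousLinearEquiv ℂ toProd u v‖ ^ r)) ^ (1 / r) := by
  rw [lpnorm3, ← mp_toProd.lintegral_comp_emb me_toProd]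
  congr 1
  refine lintegral_congr fun v => ?_
  rw [← ENNReal.ofReal_rpow_of_nonneg (norm_nonneg _) hr, ofReal_norm]
  rfl

end

/-- `L^{2/(1-δ)}` estimate for dyadically localized functions:
`‖u‖_{L^{2/(1-δ)}} ≤ C L^{5δ/6} ‖u‖_{L²}` for `0 < δ < 3/5`, with `C = C(δ)`
independent of `N, M, L`. -/
theorem l2p_strichartz_localized (δ : ℝ) (hδ₀ : 0 < δ) (hδ₁ : δ < 3 / 5) :
    ∃ C : ℝ, 0 < C ∧
      ∀ N M L : ℝ, (∃ n : ℤ, N = 2 ^ n) → (∃ m : ℤ, M = 2 ^ m) →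
        (∃ l : ℤ, L = 2 ^ l) →
        ∀ u : SchwartzMap (ℝ × ℝ × ℝ) ℂ,
          (∀ τ ξ η : ℝ, ftt (fun t x y => u (t, x, y)) τ ξ η ≠ 0 →
            (N / 2 ≤ Real.sqrt (ξ ^ 2 + η ^ 2) ∧ Real.sqrt (ξ ^ 2 + η ^ 2) ≤ 2 * N ∧
              M / 2 ≤ |ξ + η| ∧ |ξ + η| ≤ 2 * M ∧
              L / 2 ≤ |τ - ξ ^ 3 - η ^ 3| ∧ |τ - ξ ^ 3 - η ^ 3| ≤ 2 * L)) →
          lpnorm3 (2 / (1 - δ)) (fun t x y => u (t, x, y)) ≤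
            ENNReal.ofReal (C * L ^ (5 * δ / 6)) *
              lpnorm3 2 (fun t x y => u (t, x, y)) := by
  have hδ : 0 < 1 - δ := by linarith
  -- `2 / (1 - δ) = q + 2` with `q < 3` exactly because `δ < 3 / 5`
  set q := 2 * δ / (1 - δ) with hq
  have hq0 : 0 < q := by positivity
  have hq3 : q < 3 := by rw [hq, div_lt_iff₀ hδ]; linarith
  have hp : 2 / (1 - δ) = q + 2 := by rw [hq]; field_simp; ring
  set K := 1 + q * (128000 * Real.exp Real.pi ^ (5 / 2 : ℝ)) / (3 - q) with hK
  have h3q : 0 < 3 - q := by linarith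
  have hK0 : 0 < K := by positivity
  refine ⟨K ^ (1 / (q + 2)), by positivity, ?_⟩
  rintro N M L ⟨n, rfl⟩ - ⟨l, rfl⟩ u hu
  have hN : (0 : ℝ) < 2 ^ n := by positivity
  have hL : (0 : ℝ) < 2 ^ l := by positivity
  generalize (2 : ℝ) ^ n = N at *
  generalize (2 : ℝ) ^ l = L at *
  rw [hp, lpnorm3_transplant _ (by positivity), lpnorm3_transplant _ (by positivity)]
  have hw : SuppIn L N (SchwartzMap.compCLMOfContinuousLinearEquiv ℂ toProd u) :=
    suppIn_transplant N L hN hL u fun τ ξ η h =>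
      ⟨(hu τ ξ η h).2.1, (hu τ ξ η h).2.2.2.2.2⟩
  generalize SchwartzMap.compCLMOfContinuousLinearEquiv ℂ toProd u = w at *
  have h2 : ∫⁻ v : V3, ENNReal.ofReal (‖w v‖ ^ (2 : ℝ)) = ENNReal.ofReal (∫ v, ‖w v‖ ^ 2) := by
    rw [ofReal_integral_eq_lintegral_ofReal (integrable_norm_sq w)
      (Filter.Eventually.of_forall fun x => by positivity)]
    simp only [Real.rpow_two]
  rcases (integral_nonneg fun v => by positivity : 0 ≤ ∫ v, ‖w v‖ ^ 2).eq_or_lt with hU | hU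
  · have h0 : ∀ᵐ v, ‖w v‖ ^ 2 = 0 :=
      (integral_eq_zero_iff_of_nonneg (fun v => by positivity) (integrable_norm_sq w)).1 hU.symm
    have : ∫⁻ v : V3, ENNReal.ofReal (‖w v‖ ^ (q + 2)) = 0 := by
      rw [lintegral_congr_ae (g := fun _ => 0), lintegral_zero]
      filter_upwards [h0] with v hv
      rw [pow_eq_zero_iff (by norm_num)] at hv
      rw [hv, Real.zero_rpow (by positivity), ENNReal.ofReal_zero]
    rw [this, ENNReal.zero_rpow_of_pos (by positivity)]
    exact zero_le
  · rw [h2, ENNReal.ofReal_rpow_of_pos hU, ← ENNReal.ofReal_mul (by positivity)]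
    refine (ENNReal.rpow_le_rpow (lp_bound q L N hq0 hq3 hL hN.le w hw hU)
      (by positivity)).trans_eq ?_
    generalize ∫ v, ‖w v‖ ^ 2 = U at *
    rw [← hK, ENNReal.ofReal_rpow_of_pos (by positivity)]
    congr 1
    -- both sides are monomials in `K`, `L`, `U`
    have hUq : U * (L ^ (5 / 6 : ℝ) * U ^ (1 / 2 : ℝ)) ^ q =
        L ^ (5 / 6 * q) * U ^ (1 / 2 * (q + 2)) := by
      rw [Real.mul_rpow (by positivity) (by positivity), ← Real.rpow_mul hL.le,
        ← Real.rpow_mul hU.le, mul_add, Real.rpow_add hU]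
      norm_num
      ring
    rw [hUq, Real.mul_rpow hK0.le (by positivity), Real.mul_rpow (by positivity) (by positivity),
      ← Real.rpow_mul hL.le, ← Real.rpow_mul hU.le]
    have e1 : 5 / 6 * q * (1 / (q + 2)) = 5 * δ / 6 := by rw [← hp, hq]; field_simp
    have e2 : 1 / 2 * (q + 2) * (1 / (q + 2)) = 1 / 2 := by field_simp
    rw [e1, e2, mul_assoc]
end
end

section
/- There exist an absolute constant c₀ ≥ 2 and δ₀ ∈ (0,1) such that for every δ ∈ (0,δ₀) and every ε with 0 < ε < 1−δ there is C = C(δ,ε) > 0 with the following property. Let N₁, M₁, N₂, M₂, L₁, L₂ be dyadic numbers with N₁ ≥ c₀ N₂, and let u₁, u₂ ∈ 𝒮(ℝ×ℝ²) be such that ũᵢ(τ,ξ,η) is supported in { (τ,ξ,η) : Nᵢ/2 ≤ |(ξ,η)| ≤ 2Nᵢ, Mᵢ/2 ≤ |ξ+η| ≤ 2Mᵢ, Lᵢ/2 ≤ |τ − ξ³ − η³| ≤ 2Lᵢ } for i = 1,2. Then ‖u₁ u₂‖_{L^{2/(1+δ)}_{t,x,y}(ℝ×ℝ²)} ≤ C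 J_{δ,ε} (L₁L₂)^{(1−δ)/2 − ε/4} ‖u₁‖_{L²_{t,x,y}} ‖u₂‖_{L²_{t,x,y}}, where J_{δ,ε} = (N₁M₁N₂M₂)^{ε/4} (N₁^{-1} N₂^{1/2})^{1−δ−ε}. -/
/-!
The exponent `2 / (1 + δ)` lies between `1` and `2`, and Hölder's inequality gives
`‖w‖_{2/(1+δ)} ≤ ‖w‖₁ ^ δ * ‖w‖₂ ^ (1 - δ)`. For `w = u₁ u₂` the `L¹` norm is at most
`‖u₁‖₂ ‖u₂‖₂` by Cauchy–Schwarz, so everything rests on the `L²` norm of the product.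

By Plancherel, `‖u₁ u₂‖₂` is the `L²` norm of the convolution of the Fourier transforms.
Cauchy–Schwarz in the convolution integral yields `‖u₁ u₂‖₂² ≤ K ‖u₁‖₂² ‖u₂‖₂²`, where `K` is the
largest measure of an interaction set `{v ∈ supp ũ₂ : p - v ∈ supp ũ₁}`
(`lintegral_sq_mul_le`, `lintegral_sq_mul_le_ftt`). Two bounds on `K` are used.

* `K` is at most the measure of either support, hence `K ≲ Nᵢ Mᵢ Lᵢ` (`volume_block_le`).
* `K ≲ N₂ L₁ L₂ / N₁²` (`volume_interaction_le`). The modulation constraints confine `τ` to an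
  interval of length `≲ min L₁ L₂`. They also force the resonance function
  `(ξ₀ - ξ)³ + ξ³ + (η₀ - η)³ + η³` to be within `≲ max L₁ L₂` of `τ₀`. In each variable this
  function is quadratic, with
  `((a - t)³ + t³) - ((a - s)³ + s³) = -3 a (s - t) (s + t - a)`; if the corresponding coordinate of
  the high frequency is comparable to `N₁`, then `|a|` and `|s + t - a|` are both `≳ N₁`, so the
  variable ranges over a set of diameter `≲ max L₁ L₂ / N₁²`, while the other one ranges over an
  interval of length `≲ N₂`.

The weighted geometric mean of these bounds is exactly the claimed gain (`rpow_le_gain`).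
-/

noncomputable section

open MeasureTheory
open scoped ENNReal

open scoped SchwartzMap FourierTransform

/-! ### Bilinear L² estimate through convolution -/

theorem lintegral_sq_fourier {V : Type*} [NormedAddCommGroup V] [InnerProductSpace ℝ V]
    [FiniteDimensional ℝ V] [MeasurableSpace V] [BorelSpace V] (f : 𝓢(V, ℂ)) :
    ∫⁻ x, ‖𝓕 f x‖ₑ ^ (2 : ℝ) = ∫⁻ x, ‖f x‖ₑ ^ (2 : ℝ) := by
  have key : ∀ g : 𝓢(V, ℂ), ∫⁻ x, ‖g x‖ₑ ^ (2 : ℝ) = ENNReal.ofReal (∫ x, ‖g x‖ ^ 2) := by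
    intro g
    rw [ofReal_integral_eq_lintegral_ofReal]
    · refine lintegral_congr fun x => ?_
      rw [← ofReal_norm, ENNReal.ofReal_rpow_of_nonneg (norm_nonneg _) (by norm_num)]
      norm_num
    · have := (g.memLp 2 (volume : Measure V)).integrable_norm_pow (by norm_num)
      simpa using this
    · exact Filter.Eventually.of_forall fun x => by positivity
  rw [key, key, SchwartzMap.integral_norm_sq_fourier]

/-- Bilinear `L²` estimate: the constant is the largest measure of the set of frequency pairs that
interact to produce a given output frequency `p`. -/
theorem lintegral_sq_mul_le {V : Type*} [NormedAddCommGroup V] [InnerProductSpace ℝ V]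
    [FiniteDimensional ℝ V] [MeasurableSpace V] [BorelSpace V] (f g : 𝓢(V, ℂ)) (K : ℝ≥0∞)
    (hK : ∀ p, volume {q | 𝓕 f q ≠ 0 ∧ 𝓕 g (p - q) ≠ 0} ≤ K) :
    ∫⁻ x, ‖f x * g x‖ₑ ^ (2 : ℝ) ≤
      K * ((∫⁻ x, ‖f x‖ₑ ^ (2 : ℝ)) * ∫⁻ x, ‖g x‖ₑ ^ (2 : ℝ)) := by
  set F := 𝓕 f with hF
  set G := 𝓕 g with hG
  set H := SchwartzMap.convolution (ContinuousLinearMap.mul ℂ ℂ) F G with hH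
  -- `H = 𝓕 f ⋆ 𝓕 g`, and transforming once more gives back `f * g` up to reflection.
  have hFG : ∀ x, 𝓕 H x = f (-x) * g (-x) := by
    intro x
    have inv : ∀ h : 𝓢(V, ℂ), 𝓕 (𝓕 h) x = h (-x) := by
      intro h
      have h1 : 𝓕⁻ (𝓕 h) (-x) = h (-x) := by simp
      rw [← h1, SchwartzMap.fourierInv_apply_eq]
      simp
    rw [hH, SchwartzMap.fourier_convolution]
    simp [hF, hG, inv]
  have e1 : ∫⁻ x, ‖f x * g x‖ₑ ^ (2 : ℝ) = ∫⁻ x, ‖H x‖ₑ ^ (2 : ℝ) := by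
    rw [← lintegral_sq_fourier H]
    simp_rw [hFG]
    exact ((Measure.measurePreserving_neg (volume : Measure V)).lintegral_comp_emb
      (MeasurableEquiv.neg V).measurableEmbedding (fun x => ‖f x * g x‖ₑ ^ (2 : ℝ))).symm
  have mF : Measurable fun x => ‖F x‖ₑ := F.continuous.enorm.measurable
  have mG : Measurable fun x => ‖G x‖ₑ := G.continuous.enorm.measurable
  have hpt : ∀ p, ‖H p‖ₑ ^ (2 : ℝ) ≤ K * ∫⁻ q, ‖F q‖ₑ ^ (2 : ℝ) * ‖G (p - q)‖ₑ ^ (2 : ℝ) := by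
    intro p
    set S := {q | F q ≠ 0 ∧ G (p - q) ≠ 0} with hS
    have mS : MeasurableSet S :=
      ((isOpen_ne_fun F.continuous continuous_const).inter
        (isOpen_ne_fun (G.continuous.comp (continuous_const.sub continuous_id))
          continuous_const)).measurableSet
    have mGp : Measurable fun q => ‖G (p - q)‖ₑ :=
      mG.comp (measurable_const.sub measurable_id)
    have h1 : ‖H p‖ₑ ≤ ∫⁻ q, ‖F q‖ₑ * ‖G (p - q)‖ₑ := by
      rw [hH, SchwartzMap.convolution_apply]
      refine (enorm_integral_le_lintegral_enorm _).trans (le_of_eq ?_)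
      simp [enorm_mul]
    -- The indicator of the interaction set is inserted for free, and Cauchy–Schwarz is applied.
    have h2 : ∫⁻ q, ‖F q‖ₑ * ‖G (p - q)‖ₑ =
        ∫⁻ q, (S.indicator 1 q : ℝ≥0∞) ^ (1 / 2 : ℝ) *
          (‖F q‖ₑ ^ (2 : ℝ) * ‖G (p - q)‖ₑ ^ (2 : ℝ)) ^ (1 / 2 : ℝ) := by
      refine lintegral_congr fun q => ?_
      rw [ENNReal.mul_rpow_of_nonneg _ _ (by norm_num : (0 : ℝ) ≤ 1 / 2), ← ENNReal.rpow_mul,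
        ← ENNReal.rpow_mul]
      by_cases hq : q ∈ S
      · simp [hq]
      · have : F q = 0 ∨ G (p - q) = 0 := by
          by_contra hc; push Not at hc; exact hq hc
        rcases this with h | h <;> simp [h]
    have h3 := ENNReal.lintegral_mul_norm_pow_le (μ := (volume : Measure V))
      (f := fun q => S.indicator 1 q)
      (g := fun q => ‖F q‖ₑ ^ (2 : ℝ) * ‖G (p - q)‖ₑ ^ (2 : ℝ))
      ((measurable_one.indicator mS).aemeasurable)
      ((mF.pow_const _).mul (mGp.pow_const _)).aemeasurable
      (p := 1 / 2) (q := 1 / 2) (by norm_num) (by norm_num) (by norm_num)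
    rw [lintegral_indicator_one mS] at h3
    have h4 := ENNReal.rpow_le_rpow (h1.trans (h2.le.trans h3)) (by norm_num : (0 : ℝ) ≤ 2)
    rw [ENNReal.mul_rpow_of_nonneg _ _ (by norm_num : (0 : ℝ) ≤ 2), ← ENNReal.rpow_mul,
      ← ENNReal.rpow_mul] at h4
    norm_num at h4
    norm_num
    exact h4.trans (by gcongr; exact hK p)
  have mGG : Measurable fun x : V × V => ‖G (x.1 - x.2)‖ₑ ^ (2 : ℝ) :=
    (mG.comp (measurable_fst.sub measurable_snd)).pow_const _
  calc ∫⁻ x, ‖f x * g x‖ₑ ^ (2 : ℝ) = ∫⁻ x, ‖H x‖ₑ ^ (2 : ℝ) := e1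
    _ ≤ ∫⁻ p, K * ∫⁻ q, ‖F q‖ₑ ^ (2 : ℝ) * ‖G (p - q)‖ₑ ^ (2 : ℝ) := lintegral_mono hpt
    _ = K * ∫⁻ p, ∫⁻ q, ‖F q‖ₑ ^ (2 : ℝ) * ‖G (p - q)‖ₑ ^ (2 : ℝ) := by
        refine lintegral_const_mul _ (Measurable.lintegral_prod_right' (f := fun x : V × V =>
          ‖F x.2‖ₑ ^ (2 : ℝ) * ‖G (x.1 - x.2)‖ₑ ^ (2 : ℝ)) ?_)
        exact ((mF.comp measurable_snd).pow_const _).mul mGG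
    _ = K * ∫⁻ q, ∫⁻ p, ‖F q‖ₑ ^ (2 : ℝ) * ‖G (p - q)‖ₑ ^ (2 : ℝ) := by
        rw [lintegral_lintegral_swap]
        exact (((mF.comp measurable_snd).pow_const _).mul mGG).aemeasurable
    _ = K * ∫⁻ q, ‖F q‖ₑ ^ (2 : ℝ) * ∫⁻ p, ‖G p‖ₑ ^ (2 : ℝ) := by
        congr 1
        refine lintegral_congr fun q => ?_
        have m : Measurable fun p => ‖G (p - q)‖ₑ ^ (2 : ℝ) :=
          (mG.comp (measurable_id.sub measurable_const)).pow_const _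
        rw [lintegral_const_mul _ m,
          lintegral_sub_right_eq_self (fun p => ‖G p‖ₑ ^ (2 : ℝ))]
    _ = _ := by
        rw [lintegral_mul_const _ (by fun_prop), lintegral_sq_fourier, lintegral_sq_fourier]

/-! ### Measure of frequency interaction sets -/

theorem volume_le_of_abs_sub_le {S : Set ℝ} {d : ℝ} (h : ∀ s ∈ S, ∀ t ∈ S, |s - t| ≤ d) :
    volume S ≤ ENNReal.ofReal d := by
  refine (Real.volume_le_diam S).trans (Metric.ediam_le fun s hs t ht => ?_)
  rw [edist_dist, Real.dist_eq]
  exact ENNReal.ofReal_le_ofReal (h s hs t ht)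

/-- A set over `T` whose horizontal slices all have measure at most `a` has measure at most
`a * volume T`. -/
theorem prod_le_of_snd {α β : Type*} [MeasureSpace α] [MeasureSpace β]
    [SFinite (volume : Measure α)] [SFinite (volume : Measure β)] {S : Set (α × β)}
    (mS : MeasurableSet S) {T : Set β} (mT : MeasurableSet T) {a b : ℝ≥0∞}
    (hT : ∀ x ∈ S, x.2 ∈ T) (ha : ∀ y, volume {x | (x, y) ∈ S} ≤ a) (hb : volume T ≤ b) :
    volume S ≤ a * b := by
  rw [Measure.volume_eq_prod, Measure.prod_apply_symm mS]
  calc ∫⁻ y, volume ((fun x => (x, y)) ⁻¹' S) ≤ ∫⁻ y, T.indicator (fun _ => a) y := by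
        refine lintegral_mono fun y => ?_
        by_cases hy : y ∈ T
        · rw [Set.indicator_of_mem hy]
          exact ha y
        · have : (fun x => (x, y)) ⁻¹' S = ∅ := by
            ext x
            simp only [Set.mem_preimage, Set.mem_empty_iff_false, iff_false]
            exact fun h => hy (hT _ h)
          simp [this]
    _ = a * volume T := by rw [lintegral_indicator_const mT]
    _ ≤ a * b := by gcongr

theorem prod_le_of_fst {α β : Type*} [MeasureSpace α] [MeasureSpace β]
    [SFinite (volume : Measure α)] [SFinite (volume : Measure β)] {S : Set (α × β)}
    (mS : MeasurableSet S) {T : Set α} (mT : MeasurableSet T) {a b : ℝ≥0∞}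
    (hT : ∀ x ∈ S, x.1 ∈ T) (ha : ∀ x, volume {y | (x, y) ∈ S} ≤ a) (hb : volume T ≤ b) :
    volume S ≤ a * b := by
  rw [Measure.volume_eq_prod, ← (Measure.measurePreserving_swap (μ := (volume : Measure β))
    (ν := (volume : Measure α))).measure_preimage mS.nullMeasurableSet]
  exact prod_le_of_snd (S := Prod.swap ⁻¹' S) (measurable_swap mS) mT
    (fun x hx => hT _ hx) ha hb

/-- Measure of a superset of the Fourier support of one factor. -/
theorem volume_block_le {N M L : ℝ} (hM : 0 < M) (hL : 0 < L) :
    volume {v : ℝ × ℝ × ℝ | |v.2.1| ≤ 2 * N ∧ |v.2.1 + v.2.2| ≤ 2 * M ∧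
      |v.1 - v.2.1 ^ 3 - v.2.2 ^ 3| ≤ 2 * L} ≤ ENNReal.ofReal (64 * (N * M * L)) := by
  have e : (64 * (N * M * L)) = (4 * L) * ((4 * M) * (4 * N)) := by ring
  rw [e, ENNReal.ofReal_mul (by positivity : 0 ≤ 4 * L),
    ENNReal.ofReal_mul (by positivity : 0 ≤ 4 * M)]
  refine prod_le_of_snd (T := {z : ℝ × ℝ | |z.1| ≤ 2 * N ∧ |z.1 + z.2| ≤ 2 * M}) ?_ ?_
    (fun x hx => ⟨hx.1, hx.2.1⟩) (fun z => volume_le_of_abs_sub_le ?_) ?_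
  · measurability
  · measurability
  · rintro s ⟨-, -, hs⟩ t ⟨-, -, ht⟩
    rw [abs_le] at *
    constructor <;> linarith [hs.1, hs.2, ht.1, ht.2]
  · refine prod_le_of_fst (T := {x : ℝ | |x| ≤ 2 * N}) ?_ ?_
      (fun x hx => hx.1) (fun z => volume_le_of_abs_sub_le ?_) (volume_le_of_abs_sub_le ?_)
    · measurability
    · measurability
    · rintro s ⟨-, hs⟩ t ⟨-, ht⟩
      rw [abs_le] at *
      constructor <;> linarith [hs.1, hs.2, ht.1, ht.2]
    · rintro s hs t ht
      simp only [Set.mem_ofPred_eq] at hs ht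
      rw [abs_le] at *
      constructor <;> linarith [hs.1, hs.2, ht.1, ht.2]

/-- Transversality: in one variable the resonance function `(a - s)³ + s³` has difference quotient
`3 a (s + t - a)` in absolute value, of size at least `N₁² / 10` when the high frequency `a - s` is
large and `s`, `t` are low frequencies. So its sublevel sets have small diameter. -/
theorem abs_sub_le_of_resonance {N₁ N₂ L a s t c : ℝ} (hN₂ : 0 < N₂) (hN : 16 * N₂ ≤ N₁)
    (hs : |s| ≤ 2 * N₂) (ht : |t| ≤ 2 * N₂) (has : N₁ / 3 ≤ |a - s|)
    (hcs : |c - (a - s) ^ 3 - s ^ 3| ≤ L) (hct : |c - (a - t) ^ 3 - t ^ 3| ≤ L) :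
    |s - t| ≤ 20 * L / N₁ ^ 2 := by
  have hN₁ : 0 < N₁ := by linarith
  have h1 : N₁ / 5 ≤ |a| := by
    have := abs_sub a s
    linarith
  have h2 : N₁ / 5 ≤ |s + t - a| := by
    have h := abs_sub_abs_le_abs_sub (a - s) t
    rw [show a - s - t = -(s + t - a) by ring, abs_neg] at h
    linarith
  have h3 : |s - t| * (3 * |a| * |s + t - a|) ≤ 2 * L := by
    have e : |s - t| * (3 * |a| * |s + t - a|)
        = |(c - (a - t) ^ 3 - t ^ 3) - (c - (a - s) ^ 3 - s ^ 3)| := by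
      rw [show (c - (a - t) ^ 3 - t ^ 3) - (c - (a - s) ^ 3 - s ^ 3)
        = (s - t) * (3 * a * (s + t - a)) by ring, abs_mul, abs_mul, abs_mul]
      norm_num
    rw [e]
    refine (abs_sub _ _).trans ?_
    linarith
  have h4 : N₁ / 5 * (N₁ / 5) ≤ |a| * |s + t - a| := by gcongr
  rw [le_div_iff₀ (by positivity)]
  have h5 := mul_le_mul_of_nonneg_left h4 (abs_nonneg (s - t))
  have h6 : 0 ≤ |s - t| * N₁ ^ 2 := by positivity
  nlinarith

/-- Measure of the low spatial frequencies `z` for which `(ξ₀, η₀) - z` is a high frequency and the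
resonance function is within `L` of `τ₀`. The set is split according to which coordinate of the high
frequency is large. -/
theorem volume_resonant_le {N₁ N₂ L τ₀ ξ₀ η₀ : ℝ} (hN₂ : 0 < N₂) (hN : 16 * N₂ ≤ N₁)
    (hL : 0 < L) :
    volume {z : ℝ × ℝ | (N₁ / 3 ≤ |ξ₀ - z.1| ∨ N₁ / 3 ≤ |η₀ - z.2|) ∧ |z.1| ≤ 2 * N₂ ∧
      |z.2| ≤ 2 * N₂ ∧
      |τ₀ - (ξ₀ - z.1) ^ 3 - z.1 ^ 3 - (η₀ - z.2) ^ 3 - z.2 ^ 3| ≤ L} ≤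
      ENNReal.ofReal (160 * (L * N₂ / N₁ ^ 2)) := by
  have hN₁ : 0 < N₁ := by linarith
  have mI : MeasurableSet {x : ℝ | |x| ≤ 2 * N₂} :=
    by measurability
  have vI : volume {x : ℝ | |x| ≤ 2 * N₂} ≤ ENNReal.ofReal (4 * N₂) := by
    refine volume_le_of_abs_sub_le ?_
    rintro s hs t ht
    simp only [Set.mem_ofPred_eq] at hs ht
    rw [abs_le] at *
    constructor <;> linarith [hs.1, hs.2, ht.1, ht.2]
  set A := {z : ℝ × ℝ | N₁ / 3 ≤ |ξ₀ - z.1| ∧ |z.1| ≤ 2 * N₂ ∧ |z.2| ≤ 2 * N₂ ∧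
      |τ₀ - (ξ₀ - z.1) ^ 3 - z.1 ^ 3 - (η₀ - z.2) ^ 3 - z.2 ^ 3| ≤ L} with hA
  set B := {z : ℝ × ℝ | N₁ / 3 ≤ |η₀ - z.2| ∧ |z.1| ≤ 2 * N₂ ∧ |z.2| ≤ 2 * N₂ ∧
      |τ₀ - (ξ₀ - z.1) ^ 3 - z.1 ^ 3 - (η₀ - z.2) ^ 3 - z.2 ^ 3| ≤ L} with hB
  have mA : MeasurableSet A := by
    measurability
  have mB : MeasurableSet B := by
    measurability
  have vA : volume A ≤ ENNReal.ofReal (20 * L / N₁ ^ 2) * ENNReal.ofReal (4 * N₂) := by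
    refine prod_le_of_snd mA mI (fun x hx => hx.2.2.1)
      (fun z => volume_le_of_abs_sub_le ?_) vI
    rintro s ⟨h1, h2, -, h4⟩ t ⟨-, h6, -, h8⟩
    refine abs_sub_le_of_resonance (a := ξ₀) (c := τ₀ - (η₀ - z) ^ 3 - z ^ 3) hN₂ hN h2 h6 h1 ?_ ?_
    · convert h4 using 2; ring
    · convert h8 using 2; ring
  have vB : volume B ≤ ENNReal.ofReal (20 * L / N₁ ^ 2) * ENNReal.ofReal (4 * N₂) := by
    refine prod_le_of_fst mB mI (fun x hx => hx.2.1)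
      (fun z => volume_le_of_abs_sub_le ?_) vI
    rintro s ⟨h1, -, h2, h4⟩ t ⟨-, -, h6, h8⟩
    exact abs_sub_le_of_resonance (a := η₀) (c := τ₀ - (ξ₀ - z) ^ 3 - z ^ 3) hN₂ hN h2 h6 h1 h4 h8
  calc _ ≤ volume (A ∪ B) := by
        refine measure_mono ?_
        rintro z ⟨h | h, h'⟩
        · exact Or.inl ⟨h, h'⟩
        · exact Or.inr ⟨h, h'⟩
    _ ≤ volume A + volume B := measure_union_le _ _
    _ ≤ _ := add_le_add vA vB
    _ = _ := by
        rw [← ENNReal.ofReal_mul (by positivity), ← ENNReal.ofReal_add (by positivity)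
          (by positivity)]
        congr 1
        ring

/-- Measure of the space-time interaction set: the slice in `τ` contributes `4 * min L₁ L₂`, and the
spatial projection lies in a resonant set of width `4 * max L₁ L₂`. -/
theorem volume_interaction_le {N₁ N₂ L₁ L₂ τ₀ ξ₀ η₀ : ℝ} (hN₂ : 0 < N₂) (hN : 16 * N₂ ≤ N₁)
    (hL₁ : 0 < L₁) (hL₂ : 0 < L₂) :
    volume {v : ℝ × ℝ × ℝ |
      (N₁ / 3 ≤ |ξ₀ - v.2.1| ∨ N₁ / 3 ≤ |η₀ - v.2.2|) ∧ |v.2.1| ≤ 2 * N₂ ∧ |v.2.2| ≤ 2 * N₂ ∧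
      |v.1 - v.2.1 ^ 3 - v.2.2 ^ 3| ≤ 2 * L₂ ∧
      |(τ₀ - v.1) - (ξ₀ - v.2.1) ^ 3 - (η₀ - v.2.2) ^ 3| ≤ 2 * L₁} ≤
      ENNReal.ofReal (2560 * (N₂ * (L₁ * L₂) / N₁ ^ 2)) := by
  have hN₁ : 0 < N₁ := by linarith
  have hm : 0 < min L₁ L₂ := lt_min hL₁ hL₂
  have hM : 0 < max L₁ L₂ := lt_max_of_lt_left hL₁
  have e : 2560 * (N₂ * (L₁ * L₂) / N₁ ^ 2) =
      4 * min L₁ L₂ * (160 * ((4 * max L₁ L₂) * N₂ / N₁ ^ 2)) := by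
    rw [← min_mul_max L₁ L₂]; ring
  rw [e, ENNReal.ofReal_mul (by positivity : 0 ≤ 4 * min L₁ L₂)]
  refine prod_le_of_snd (T := {z : ℝ × ℝ | (N₁ / 3 ≤ |ξ₀ - z.1| ∨ N₁ / 3 ≤ |η₀ - z.2|) ∧
      |z.1| ≤ 2 * N₂ ∧ |z.2| ≤ 2 * N₂ ∧
      |τ₀ - (ξ₀ - z.1) ^ 3 - z.1 ^ 3 - (η₀ - z.2) ^ 3 - z.2 ^ 3| ≤ 4 * max L₁ L₂}) ?_ ?_
    ?_ (fun z => volume_le_of_abs_sub_le ?_) (volume_resonant_le hN₂ hN (by positivity))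
  · measurability
  · measurability
  · rintro ⟨τ, ξ, η⟩ ⟨h1, h2, h3, h4, h5⟩
    refine ⟨h1, h2, h3, ?_⟩
    have := le_max_left L₁ L₂
    have := le_max_right L₁ L₂
    simp only at h4 h5 ⊢
    rw [abs_le] at h4 h5 ⊢
    constructor <;> linarith [h4.1, h4.2, h5.1, h5.2]
  · rintro s ⟨-, -, -, h4, h5⟩ t ⟨-, -, -, h4', h5'⟩
    simp only at h4 h5 h4' h5'
    rw [abs_le] at h4 h5 h4' h5'
    rcases le_total L₁ L₂ with h | h
    · rw [min_eq_left h, abs_le]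
      constructor <;> linarith [h5.1, h5.2, h5'.1, h5'.2]
    · rw [min_eq_right h, abs_le]
      constructor <;> linarith [h4.1, h4.2, h4'.1, h4'.2]

/-! ### Transfer to coordinates -/

/-- `ℝ × ℝ²` with its Euclidean norm; the sup norm on `ℝ × ℝ × ℝ` is not an inner product norm, and
the Fourier transform on Schwartz functions requires one. -/
abbrev SpaceTime : Type := WithLp 2 (ℝ × WithLp 2 (ℝ × ℝ))

/-- The identity map from Euclidean space-time to coordinates `(t, x, y)`. -/
def toCoord : SpaceTime ≃L[ℝ] ℝ × ℝ × ℝ :=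
  (WithLp.prodContinuousLinearEquiv 2 ℝ ℝ (WithLp 2 (ℝ × ℝ))).trans
    ((ContinuousLinearEquiv.refl ℝ ℝ).prodCongr (WithLp.prodContinuousLinearEquiv 2 ℝ ℝ ℝ))

theorem measurePreserving_toCoord : MeasurePreserving toCoord := by
  have h1 := WithLp.volume_preserving_ofLp ℝ (WithLp 2 (ℝ × ℝ))
  have h2 := (MeasurePreserving.id (volume : Measure ℝ)).prod (WithLp.volume_preserving_ofLp ℝ ℝ)
  exact h2.comp h1

instance isAddHaarMeasure_volume_coord :
    (volume : Measure (ℝ × ℝ × ℝ)).IsAddHaarMeasure := by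
  have h : (volume : Measure (ℝ × ℝ)).IsAddHaarMeasure :=
    inferInstanceAs ((volume : Measure ℝ).prod (volume : Measure ℝ)).IsAddHaarMeasure
  exact inferInstanceAs ((volume : Measure ℝ).prod (volume : Measure (ℝ × ℝ))).IsAddHaarMeasure

theorem measurableEmbedding_toCoord : MeasurableEmbedding toCoord :=
  toCoord.toHomeomorph.measurableEmbedding

theorem inner_eq_toCoord (v p : SpaceTime) :
    inner ℝ v p = (toCoord v).1 * (toCoord p).1 + (toCoord v).2.1 * (toCoord p).2.1 +
      (toCoord v).2.2 * (toCoord p).2.2 := by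
  simp [toCoord, WithLp.prod_inner_apply]
  ring

/-- The transform `ftt` has phase `t τ + x ξ + y η`, without the factor `2π`, so
the two transforms differ by a dilation of frequency space. -/
theorem fourier_comp_toCoord (u : 𝓢(ℝ × ℝ × ℝ, ℂ)) (p : SpaceTime) :
    𝓕 (SchwartzMap.compCLMOfContinuousLinearEquiv ℂ toCoord u) p =
      ftt (fun t x y => u (t, x, y)) (2 * Real.pi * (toCoord p).1) (2 * Real.pi * (toCoord p).2.1)
        (2 * Real.pi * (toCoord p).2.2) := by
  obtain ⟨⟨τ, ξ, η⟩, hc⟩ : ∃ c, c = toCoord p := ⟨_, rfl⟩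
  rw [SchwartzMap.fourier_coe, Real.fourier_eq']
  set g : ℝ × ℝ × ℝ → ℂ := fun v =>
    Complex.exp (-Complex.I * ((v.1 * (2 * Real.pi * τ) + v.2.1 * (2 * Real.pi * ξ) +
      v.2.2 * (2 * Real.pi * η) : ℝ) : ℂ)) * u v with hg
  have e1 : ∀ v : SpaceTime, Complex.exp (↑(-2 * Real.pi * inner ℝ v p) * Complex.I) •
      (SchwartzMap.compCLMOfContinuousLinearEquiv ℂ toCoord u) v = g (toCoord v) := by
    intro v
    simp only [hg, inner_eq_toCoord, ← hc, smul_eq_mul,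
      SchwartzMap.compCLMOfContinuousLinearEquiv_apply, Function.comp]
    congr 2
    push_cast
    ring
  simp_rw [e1]
  rw [measurePreserving_toCoord.integral_comp measurableEmbedding_toCoord]
  have hgi : Integrable g := by
    refine u.integrable.bdd_mul (c := 1) ?_ ?_
    · exact Continuous.aestronglyMeasurable (by fun_prop)
    · refine Filter.Eventually.of_forall fun v => ?_
      rw [show ∀ r : ℝ, -Complex.I * (r : ℂ) = ((-r : ℝ) : ℂ) * Complex.I by
        intro r; push_cast; ring, Complex.norm_exp_ofReal_mul_I]
  rw [← hc]
  rw [Measure.volume_eq_prod] at hgi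
  rw [Measure.volume_eq_prod, integral_prod _ hgi]
  unfold ftt
  refine integral_congr_ae ?_
  filter_upwards [hgi.prod_right_ae] with t ht
  rw [Measure.volume_eq_prod] at ht
  rw [Measure.volume_eq_prod, integral_prod _ ht]

/-- `lintegral_sq_mul_le` in coordinates. The dilation by `2π` only shrinks the interaction sets. -/
theorem lintegral_sq_mul_le_ftt (u w : 𝓢(ℝ × ℝ × ℝ, ℂ)) (K : ℝ≥0∞)
    (hK : ∀ p : ℝ × ℝ × ℝ, volume {v : ℝ × ℝ × ℝ |
      ftt (fun t x y => u (t, x, y)) v.1 v.2.1 v.2.2 ≠ 0 ∧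
      ftt (fun t x y => w (t, x, y)) (p.1 - v.1) (p.2.1 - v.2.1) (p.2.2 - v.2.2) ≠ 0} ≤ K) :
    ∫⁻ v, ‖u v * w v‖ₑ ^ (2 : ℝ) ≤
      K * ((∫⁻ v, ‖u v‖ₑ ^ (2 : ℝ)) * ∫⁻ v, ‖w v‖ₑ ^ (2 : ℝ)) := by
  have tr := fun g : ℝ × ℝ × ℝ → ℝ≥0∞ =>
    measurePreserving_toCoord.lintegral_comp_emb measurableEmbedding_toCoord g
  rw [← tr, ← tr, ← tr]
  refine lintegral_sq_mul_le (SchwartzMap.compCLMOfContinuousLinearEquiv ℂ toCoord u)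
    (SchwartzMap.compCLMOfContinuousLinearEquiv ℂ toCoord w) K fun p => ?_
  simp only [fourier_comp_toCoord]
  set S := {v : ℝ × ℝ × ℝ |
      ftt (fun t x y => u (t, x, y)) v.1 v.2.1 v.2.2 ≠ 0 ∧
      ftt (fun t x y => w (t, x, y)) (2 * Real.pi * (toCoord p).1 - v.1)
        (2 * Real.pi * (toCoord p).2.1 - v.2.1) (2 * Real.pi * (toCoord p).2.2 - v.2.2) ≠ 0} with hS
  have hSK : volume S ≤ K := hK (2 * Real.pi * (toCoord p).1, 2 * Real.pi * (toCoord p).2.1,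
    2 * Real.pi * (toCoord p).2.2)
  have e : {q : SpaceTime | ftt (fun t x y => u (t, x, y)) (2 * Real.pi * (toCoord q).1)
        (2 * Real.pi * (toCoord q).2.1) (2 * Real.pi * (toCoord q).2.2) ≠ 0 ∧
      ftt (fun t x y => w (t, x, y)) (2 * Real.pi * (toCoord (p - q)).1)
        (2 * Real.pi * (toCoord (p - q)).2.1) (2 * Real.pi * (toCoord (p - q)).2.2) ≠ 0} =
      toCoord ⁻¹' ((fun v => (2 * Real.pi) • v) ⁻¹' S) := by
    ext q
    simp [hS, mul_sub]
  rw [e, measurePreserving_toCoord.measure_preimage_emb measurableEmbedding_toCoord,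
    Measure.addHaar_preimage_smul _ (by positivity)]
  refine le_trans ?_ hSK
  refine mul_le_of_le_one_left zero_le ?_
  rw [ENNReal.ofReal_le_one, abs_of_nonneg (by positivity)]
  exact inv_le_one_of_one_le₀ (one_le_pow₀ (by linarith [Real.pi_gt_three]))

/-! ### Interpolation and the gain -/

/-- Interpolation of `L^{2/(1+δ)}` between `L¹` and `L²`. -/
theorem lintegral_interpolation {w : ℝ × ℝ × ℝ → ℝ≥0∞} (hw : Measurable w) {δ : ℝ}
    (h0 : 0 < δ) (h1 : δ < 1) :
    (∫⁻ v, w v ^ (2 / (1 + δ))) ^ (1 / (2 / (1 + δ))) ≤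
      (∫⁻ v, w v) ^ δ * (∫⁻ v, w v ^ (2 : ℝ)) ^ ((1 - δ) / 2) := by
  have hd : 1 + δ ≠ 0 := by positivity
  have ha : 0 ≤ 2 * δ / (1 + δ) := by positivity
  have hb : 0 ≤ (1 - δ) / (1 + δ) := div_nonneg (by linarith) (by linarith)
  have h := ENNReal.lintegral_mul_norm_pow_le (μ := volume) (f := w) (g := fun v => w v ^ (2 : ℝ))
    hw.aemeasurable (hw.pow_const _).aemeasurable ha hb (by field_simp; ring)
  have e : ∀ v, w v ^ (2 * δ / (1 + δ)) * (w v ^ (2 : ℝ)) ^ ((1 - δ) / (1 + δ)) =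
      w v ^ (2 / (1 + δ)) := by
    intro v
    rw [← ENNReal.rpow_mul, ← ENNReal.rpow_add_of_nonneg _ _ ha (by positivity)]
    congr 1
    field_simp
    ring
  simp_rw [e] at h
  refine (ENNReal.rpow_le_rpow h (by positivity : 0 ≤ 1 / (2 / (1 + δ)))).trans (le_of_eq ?_)
  rw [ENNReal.mul_rpow_of_nonneg _ _ (by positivity), ← ENNReal.rpow_mul, ← ENNReal.rpow_mul]
  congr 2 <;> field_simp

/-- Geometric mean of the three bounds on the interaction measure `κ`, with weights
`(1 - δ - ε) / 2`, `ε / 4` and `ε / 4`. -/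
theorem rpow_le_gain {N₁ M₁ N₂ M₂ L₁ L₂ κ δ ε : ℝ} (hN₁ : 0 < N₁) (hM₁ : 0 < M₁) (hN₂ : 0 < N₂)
    (hM₂ : 0 < M₂) (hL₁ : 0 < L₁) (hL₂ : 0 < L₂) (hκ : 0 < κ)
    (hε : 0 < ε) (hεδ : ε < 1 - δ)
    (h1 : κ ≤ 2560 * (N₂ * (L₁ * L₂) / N₁ ^ 2)) (h2 : κ ≤ 2560 * (N₁ * M₁ * L₁))
    (h3 : κ ≤ 2560 * (N₂ * M₂ * L₂)) :
    κ ^ ((1 - δ) / 2) ≤ 2560 ^ ((1 - δ) / 2) * ((N₁ * M₁ * N₂ * M₂) ^ (ε / 4) *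
      (N₁⁻¹ * N₂ ^ ((1 : ℝ) / 2)) ^ (1 - δ - ε)) * (L₁ * L₂) ^ ((1 - δ) / 2 - ε / 4) := by
  have hd : 0 < 1 - δ - ε := by linarith
  have e1 : κ ^ ((1 - δ) / 2) = κ ^ ((1 - δ - ε) / 2) * κ ^ (ε / 4) * κ ^ (ε / 4) := by
    rw [← Real.rpow_add hκ, ← Real.rpow_add hκ]; congr 1; ring
  rw [e1]
  calc _ ≤ (2560 * (N₂ * (L₁ * L₂) / N₁ ^ 2)) ^ ((1 - δ - ε) / 2) *
        (2560 * (N₁ * M₁ * L₁)) ^ (ε / 4) * (2560 * (N₂ * M₂ * L₂)) ^ (ε / 4) := by gcongr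
    _ = _ := by
      -- Both sides are exponentials of linear expressions in the logarithms.
      have p : (0 : ℝ) < 2560 := by norm_num
      rw [Real.rpow_def_of_pos (by positivity), Real.rpow_def_of_pos (by positivity),
        Real.rpow_def_of_pos (by positivity), Real.rpow_def_of_pos p,
        Real.rpow_def_of_pos (by positivity : 0 < N₁ * M₁ * N₂ * M₂),
        Real.rpow_def_of_pos (by positivity : 0 < N₁⁻¹ * N₂ ^ ((1 : ℝ) / 2)),
        Real.rpow_def_of_pos (by positivity : 0 < L₁ * L₂),
        ← Real.exp_add, ← Real.exp_add, ← Real.exp_add, ← Real.exp_add, ← Real.exp_add]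
      congr 1
      have l : Real.log (N₁⁻¹ * N₂ ^ ((1 : ℝ) / 2)) = -Real.log N₁ + 1 / 2 * Real.log N₂ := by
        rw [Real.log_mul (by positivity) (by positivity), Real.log_rpow hN₂, Real.log_inv]
      rw [l, Real.log_mul (by positivity) (by positivity),
        Real.log_div (by positivity) (by positivity), Real.log_pow]
      repeat rw [Real.log_mul (by positivity) (by positivity)]
      push_cast
      ring

theorem exists_large_coord {N ξ η : ℝ} (hN : 0 < N) (h : N / 2 ≤ Real.sqrt (ξ ^ 2 + η ^ 2)) :
    N / 3 ≤ |ξ| ∨ N / 3 ≤ |η| := by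
  by_contra! hc
  have h1 := Real.le_sqrt' (by positivity) |>.1 h
  have h2 : ξ ^ 2 < (N / 3) ^ 2 := by
    rw [← sq_abs ξ]; exact pow_lt_pow_left₀ hc.1 (abs_nonneg _) (by norm_num)
  have h3 : η ^ 2 < (N / 3) ^ 2 := by
    rw [← sq_abs η]; exact pow_lt_pow_left₀ hc.2 (abs_nonneg _) (by norm_num)
  nlinarith

theorem abs_le_of_sqrt_le {N ξ η : ℝ} (h : Real.sqrt (ξ ^ 2 + η ^ 2) ≤ 2 * N) :
    |ξ| ≤ 2 * N ∧ |η| ≤ 2 * N :=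
  ⟨(Real.abs_le_sqrt (by nlinarith [sq_nonneg η])).trans h,
    (Real.abs_le_sqrt (by nlinarith [sq_nonneg ξ])).trans h⟩

/-- Interpolated bilinear Strichartz estimate in `L^{2/(1+δ)}` for products with
strongly separated spatial frequencies, with gain
`J_{δ,ε} = (N₁M₁N₂M₂)^{ε/4} (N₁⁻¹N₂^{1/2})^{1-δ-ε}`. -/
theorem bilinear_strichartz_product_interpolated :
    ∃ c₀ δ₀ : ℝ, 2 ≤ c₀ ∧ δ₀ ∈ Set.Ioo (0 : ℝ) 1 ∧
      ∀ δ : ℝ, δ ∈ Set.Ioo 0 δ₀ → ∀ ε : ℝ, 0 < ε → ε < 1 - δ →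
        ∃ C : ℝ, 0 < C ∧
          ∀ N₁ M₁ N₂ M₂ L₁ L₂ : ℝ,
            (∃ n : ℤ, N₁ = 2 ^ n) → (∃ n : ℤ, M₁ = 2 ^ n) →
            (∃ n : ℤ, N₂ = 2 ^ n) → (∃ n : ℤ, M₂ = 2 ^ n) →
            (∃ n : ℤ, L₁ = 2 ^ n) → (∃ n : ℤ, L₂ = 2 ^ n) →
            c₀ * N₂ ≤ N₁ →
            ∀ u₁ u₂ : SchwartzMap (ℝ × ℝ × ℝ) ℂ,
              (∀ τ ξ η : ℝ, ftt (fun t x y => u₁ (t, x, y)) τ ξ η ≠ 0 →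
                (N₁ / 2 ≤ Real.sqrt (ξ ^ 2 + η ^ 2) ∧ Real.sqrt (ξ ^ 2 + η ^ 2) ≤ 2 * N₁ ∧
                  M₁ / 2 ≤ |ξ + η| ∧ |ξ + η| ≤ 2 * M₁ ∧
                  L₁ / 2 ≤ |τ - ξ ^ 3 - η ^ 3| ∧ |τ - ξ ^ 3 - η ^ 3| ≤ 2 * L₁)) →
              (∀ τ ξ η : ℝ, ftt (fun t x y => u₂ (t, x, y)) τ ξ η ≠ 0 →
                (N₂ / 2 ≤ Real.sqrt (ξ ^ 2 + η ^ 2) ∧ Real.sqrt (ξ ^ 2 + η ^ 2) ≤ 2 * N₂ ∧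
                  M₂ / 2 ≤ |ξ + η| ∧ |ξ + η| ≤ 2 * M₂ ∧
                  L₂ / 2 ≤ |τ - ξ ^ 3 - η ^ 3| ∧ |τ - ξ ^ 3 - η ^ 3| ≤ 2 * L₂)) →
              lpnorm3 (2 / (1 + δ)) (fun t x y => u₁ (t, x, y) * u₂ (t, x, y)) ≤
                ENNReal.ofReal
                    (C * ((N₁ * M₁ * N₂ * M₂) ^ (ε / 4) *
                        (N₁⁻¹ * N₂ ^ ((1 : ℝ) / 2)) ^ (1 - δ - ε)) *
                      (L₁ * L₂) ^ ((1 - δ) / 2 - ε / 4)) *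
                  (lpnorm3 2 (fun t x y => u₁ (t, x, y)) *
                    lpnorm3 2 (fun t x y => u₂ (t, x, y))) := by
  -- `c₀ = 16` is what transversality needs; `2560` comes from `volume_interaction_le` and dominates
  -- the constant `64` of `volume_block_le`. Any `δ₀ < 1` would do.
  refine ⟨16, 1 / 2, by norm_num, by norm_num, fun δ hδ ε hε hεδ =>
    ⟨2560 ^ ((1 - δ) / 2), by positivity, ?_⟩⟩
  rintro N₁ M₁ N₂ M₂ L₁ L₂ ⟨a₁, ha₁⟩ ⟨a₂, ha₂⟩ ⟨a₃, ha₃⟩ ⟨a₄, ha₄⟩ ⟨a₅, ha₅⟩ ⟨a₆, ha₆⟩ hN u₁ u₂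
    hu₁ hu₂
  have hN₁ : 0 < N₁ := ha₁ ▸ by positivity
  have hM₁ : 0 < M₁ := ha₂ ▸ by positivity
  have hN₂ : 0 < N₂ := ha₃ ▸ by positivity
  have hM₂ : 0 < M₂ := ha₄ ▸ by positivity
  have hL₁ : 0 < L₁ := ha₅ ▸ by positivity
  have hL₂ : 0 < L₂ := ha₆ ▸ by positivity
  obtain ⟨hδ0, hδ2⟩ := hδ
  have hδ1 : δ < 1 := by linarith
  set κ := min (2560 * (N₂ * (L₁ * L₂) / N₁ ^ 2))
    (min (2560 * (N₁ * M₁ * L₁)) (2560 * (N₂ * M₂ * L₂))) with hκ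
  have κpos : 0 < κ := by
    refine lt_min (by positivity) (lt_min (by positivity) (by positivity))
  have hK : ∀ p : ℝ × ℝ × ℝ, volume {v : ℝ × ℝ × ℝ |
      ftt (fun t x y => u₂ (t, x, y)) v.1 v.2.1 v.2.2 ≠ 0 ∧
      ftt (fun t x y => u₁ (t, x, y)) (p.1 - v.1) (p.2.1 - v.2.1) (p.2.2 - v.2.2) ≠ 0} ≤
      ENNReal.ofReal κ := by
    intro p
    rw [hκ, ENNReal.ofReal_min, ENNReal.ofReal_min]
    refine le_min ?_ (le_min ?_ ?_)
    · refine (measure_mono ?_).trans (volume_interaction_le (τ₀ := p.1) (ξ₀ := p.2.1)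
        (η₀ := p.2.2) hN₂ hN hL₁ hL₂)
      rintro v ⟨h2, h1⟩
      have h1 := hu₁ _ _ _ h1
      have h2 := hu₂ _ _ _ h2
      have h3 := abs_le_of_sqrt_le h2.2.1
      exact ⟨exists_large_coord hN₁ h1.1, h3.1, h3.2, h2.2.2.2.2.2, h1.2.2.2.2.2⟩
    · have hsub : {v : ℝ × ℝ × ℝ |
          ftt (fun t x y => u₂ (t, x, y)) v.1 v.2.1 v.2.2 ≠ 0 ∧
          ftt (fun t x y => u₁ (t, x, y)) (p.1 - v.1) (p.2.1 - v.2.1) (p.2.2 - v.2.2) ≠ 0} ⊆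
          (fun v => p - v) ⁻¹' {v : ℝ × ℝ × ℝ | |v.2.1| ≤ 2 * N₁ ∧ |v.2.1 + v.2.2| ≤ 2 * M₁ ∧
            |v.1 - v.2.1 ^ 3 - v.2.2 ^ 3| ≤ 2 * L₁} := by
        rintro v ⟨-, h1⟩
        have h1 := hu₁ _ _ _ h1
        exact ⟨(abs_le_of_sqrt_le h1.2.1).1, h1.2.2.2.1, h1.2.2.2.2.2⟩
      refine (measure_mono hsub).trans ?_
      rw [(Measure.measurePreserving_sub_left volume p).measure_preimage_emb
        (MeasurableEquiv.subLeft p).measurableEmbedding]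
      refine (volume_block_le hM₁ hL₁).trans (ENNReal.ofReal_le_ofReal ?_)
      gcongr
      norm_num
    · refine (measure_mono ?_).trans ((volume_block_le (N := N₂) hM₂ hL₂).trans
        (ENNReal.ofReal_le_ofReal (by gcongr; norm_num)))
      rintro v ⟨h2, -⟩
      have h2 := hu₂ _ _ _ h2
      exact ⟨(abs_le_of_sqrt_le h2.2.1).1, h2.2.2.2.1, h2.2.2.2.2.2⟩
  have hL2 := lintegral_sq_mul_le_ftt u₂ u₁ (ENNReal.ofReal κ) hK
  have hgain := rpow_le_gain hN₁ hM₁ hN₂ hM₂ hL₁ hL₂ κpos hε hεδ (min_le_left _ _)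
    ((min_le_right _ _).trans (min_le_left _ _)) ((min_le_right _ _).trans (min_le_right _ _))
  have m₁ : Measurable fun v => ‖u₁ v‖ₑ := u₁.continuous.enorm.measurable
  have m₂ : Measurable fun v => ‖u₂ v‖ₑ := u₂.continuous.enorm.measurable
  set X := ∫⁻ v, ‖u₁ v‖ₑ ^ (2 : ℝ) with hX
  set Y := ∫⁻ v, ‖u₂ v‖ₑ ^ (2 : ℝ) with hY
  have hL1 : ∫⁻ v, ‖u₁ v * u₂ v‖ₑ ≤ X ^ (1 / 2 : ℝ) * Y ^ (1 / 2 : ℝ) := by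
    have h := ENNReal.lintegral_mul_norm_pow_le (μ := volume)
      (m₁.pow_const (2 : ℝ)).aemeasurable (m₂.pow_const (2 : ℝ)).aemeasurable
      (p := 1 / 2) (q := 1 / 2) (by norm_num) (by norm_num) (by norm_num)
    simp_rw [← ENNReal.rpow_mul] at h
    have half : (2 : ℝ) * (1 / 2) = 1 := by norm_num
    simp only [half, ENNReal.rpow_one, ← enorm_mul] at h
    exact h
  have hint := lintegral_interpolation (w := fun v => ‖u₁ v * u₂ v‖ₑ)
    (u₁.continuous.mul u₂.continuous).enorm.measurable hδ0 hδ1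
  change (∫⁻ v : ℝ × ℝ × ℝ, ‖u₁ v * u₂ v‖ₑ ^ (2 / (1 + δ))) ^ (1 / (2 / (1 + δ))) ≤
    _ * (X ^ (1 / 2 : ℝ) * Y ^ (1 / 2 : ℝ))
  refine hint.trans ?_
  have hδ' : 0 ≤ (1 - δ) / 2 := by linarith
  have hsq : ∫⁻ v, ‖u₁ v * u₂ v‖ₑ ^ (2 : ℝ) ≤ ENNReal.ofReal κ * (Y * X) := by
    simpa only [mul_comm] using hL2
  calc _ ≤ (X ^ (1 / 2 : ℝ) * Y ^ (1 / 2 : ℝ)) ^ δ *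
        (ENNReal.ofReal κ * (Y * X)) ^ ((1 - δ) / 2) := by gcongr
    _ = ENNReal.ofReal (κ ^ ((1 - δ) / 2)) * (X ^ (1 / 2 : ℝ) * Y ^ (1 / 2 : ℝ)) := by
        rw [ENNReal.mul_rpow_of_nonneg _ _ hδ', ENNReal.mul_rpow_of_nonneg _ _ hδ',
          ENNReal.mul_rpow_of_nonneg _ _ hδ0.le, ENNReal.ofReal_rpow_of_pos κpos,
          ← ENNReal.rpow_mul, ← ENNReal.rpow_mul]
        have split : ∀ Z : ℝ≥0∞, Z ^ (1 / 2 : ℝ) = Z ^ (1 / 2 * δ) * Z ^ ((1 - δ) / 2) := by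
          intro Z
          rw [← ENNReal.rpow_add_of_nonneg _ _ (by positivity) hδ']
          congr 1
          ring
        rw [split X, split Y]
        ring
    _ ≤ _ := by gcongr
end
end
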